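/- arXiv:math/0509469 — 3 statements merged into one kernel-verified Lean document; each statement's English description precedes it below -/
import Mathlib

section
/- For a commutative ring R, an R-module V, and alternating multilinear maps A ∈ C^a(V) (a ≥ 1) and B ∈ C^b(V), the insertion product A∘B, a priori only an (a+b−1)-multilinear map V^{a+b−1} → V, is in fact alternating, so A∘B ∈ C^{a+b−1}(V); consequently the Nijenhuis bracket [A,B] := A∘B − (−1)^{(a−1)(b−1)} B∘A lies in C^{a+b−1}(V) and satisfies the graded anticommutativity [A,B] = −(−1)^{(a−1)(b−1)}[B,A]. -/
/-!
Nijenhuis bracket on alternating multilinear cochains `C^n(V)` of an `R`-module `V`.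

We encode an `n`-ary map `(Fin n → V) → V` as a map `(ℕ → V) → V` (depending only on the
first `n` coordinates) via `ext`, so that the insertion product and the Nijenhuis bracket,
whose output arities involve `ℕ`-subtraction, can be stated uniformly.
-/

/-- Extend an `n`-ary map on `V` to a map on sequences, reading the first `n` coordinates. -/
def ext {V : Type*} {n : ℕ} (f : (Fin n → V) → V) : (ℕ → V) → V :=
  fun x => f fun i => x i

/-- The insertion product `A∘B` of an `a`-ary map `f` and a `b`-ary map `g`
(encoded as maps on sequences):
`(A∘B)(x_1,…,x_{a+b−1}) = Σ_σ sgn(σ) A(B(x_{σ(1)},…,x_{σ(b)}), x_{σ(b+1)},…,x_{σ(a+b−1)})`,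
the sum running over all permutations `σ` of `{1,…,a+b−1}` increasing on the first `b` and
on the last `a-1` positions; it is `0` when `a = 0`. -/
noncomputable def ins {V : Type*} [AddCommGroup V] (a b : ℕ) (f g : (ℕ → V) → V) :
    (ℕ → V) → V := fun x =>
  if hA : a = 0 then 0
  else
    ∑ σ ∈ Finset.univ.filter (fun σ : Equiv.Perm (Fin (a + b - 1)) =>
        (∀ i j : Fin (a + b - 1), i < j → (j : ℕ) < b → σ i < σ j) ∧
        (∀ i j : Fin (a + b - 1), i < j → b ≤ (i : ℕ) → σ i < σ j)),
      (Equiv.Perm.sign σ : ℤ) •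
        f (fun i : ℕ =>
          if i = 0 then
            g (fun k : ℕ =>
              if hk : k < b then x ((σ ⟨k, by omega⟩ : Fin (a + b - 1)) : ℕ) else 0)
          else if hi : b + i - 1 < a + b - 1 then
            x ((σ ⟨b + i - 1, hi⟩ : Fin (a + b - 1)) : ℕ)
          else 0)

/-- The Nijenhuis bracket `[A,B] := A∘B − (−1)^{(a−1)(b−1)} B∘A`. -/
noncomputable def nij {V : Type*} [AddCommGroup V] (a b : ℕ) (f g : (ℕ → V) → V) :
    (ℕ → V) → V := fun x =>
  ins a b f g x - (Int.negOnePow (((a : ℤ) - 1) * ((b : ℤ) - 1)) : ℤ) • ins b a g f x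

/-!
`A ∘ B` is obtained from the exterior product `B ∧ ι` of `B` with the universal alternating map
`ι : V^(a-1) → ⋀^(a-1) V`, by composing with the linear map `V ⊗ ⋀^(a-1) V → V` that `A` induces;
this makes it alternating. Mathlib defines the exterior product by a sum over the cosets of
`S_b × S_(a-1)` in `S_(a+b-1)`. Each coset contains exactly one shuffle, found by sorting the two
blocks separately, so that sum is the sum over shuffles in the definition of `ins`.
-/

open Equiv (Perm)
open Equiv.Perm (ModSumCongr sign sumCongr)
open Function (Injective)
open scoped TensorProduct

section Shuffle

/-- A map out of two blocks is a shuffle if it is strictly increasing on each of them. For a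
bijection `e` from the blocks onto `γ`, the shuffle permutations of the informal statement are the
permutations `σ` of `γ` such that `σ ∘ e` is a shuffle. -/
def IsShuffle {ι κ γ : Type*} [Preorder ι] [Preorder κ] [Preorder γ] (f : ι ⊕ κ → γ) : Prop :=
  StrictMono (f ∘ Sum.inl) ∧ StrictMono (f ∘ Sum.inr)

variable {ι κ γ : Type*} [LinearOrder ι] [LinearOrder κ]

theorem comp_perm_eq_of_strictMono [WellFoundedLT ι] [Preorder γ] {f : ι → γ} {s : Perm ι}
    (hf : StrictMono f) (hfs : StrictMono (f ∘ s)) : f ∘ s = f :=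
  (hfs.range_inj hf).mp (EquivLike.range_comp f s)

theorem exists_perm_strictMono_comp [Finite ι] [LinearOrder γ] {f : ι → γ} (hf : Injective f) :
    ∃ s : Perm ι, StrictMono (f ∘ s) := by
  have := Fintype.ofFinite ι
  let r : ι ≃ Set.range f := Equiv.ofInjective f hf
  let φ : ι ≃o Set.range f :=
    (Fintype.orderIsoFinOfCardEq ι rfl).symm.trans
      (Fintype.orderIsoFinOfCardEq (Set.range f) (Fintype.card_congr r).symm)
  refine ⟨φ.toEquiv.trans r.symm, fun i j hij => ?_⟩
  have apply_perm (k : ι) : f (r.symm (φ k)) = φ k := Equiv.apply_ofInjective_symm hf (φ k)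
  simpa [apply_perm] using hij

theorem IsShuffle.comp_sumMap_eq [WellFoundedLT ι] [WellFoundedLT κ] [Preorder γ]
    {f : ι ⊕ κ → γ} {s : Perm ι} {t : Perm κ} (hf : IsShuffle f)
    (hfst : IsShuffle (f ∘ Sum.map s t)) : f ∘ Sum.map s t = f := by
  have hl := comp_perm_eq_of_strictMono hf.1 hfst.1
  have hr := comp_perm_eq_of_strictMono hf.2 hfst.2
  ext (i | j)
  exacts [congrFun hl i, congrFun hr j]

theorem exists_isShuffle_comp_sumMap [Finite ι] [Finite κ] [LinearOrder γ] {f : ι ⊕ κ → γ}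
    (hf : Injective f) : ∃ (s : Perm ι) (t : Perm κ), IsShuffle (f ∘ Sum.map s t) := by
  obtain ⟨s, hs⟩ := exists_perm_strictMono_comp (hf.comp Sum.inl_injective)
  obtain ⟨t, ht⟩ := exists_perm_strictMono_comp (hf.comp Sum.inr_injective)
  exact ⟨s, t, hs, ht⟩

theorem mk_eq_mk_modSumCongr_iff {ι κ : Type*} {ρ τ : Perm (ι ⊕ κ)} :
    (QuotientGroup.mk ρ : ModSumCongr ι κ) = QuotientGroup.mk τ ↔
      ∃ (s : Perm ι) (t : Perm κ), τ = ρ * sumCongr s t := by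
  simp [QuotientGroup.eq, eq_inv_mul_iff_mul_eq, eq_comm]

theorem bijOn_mk_modSumCongr_isShuffle [Finite ι] [Finite κ] [LinearOrder γ] (e : ι ⊕ κ ≃ γ) :
    Set.BijOn (fun σ : Perm γ => (QuotientGroup.mk (e.symm.permCongr σ) : ModSumCongr ι κ))
      {σ | IsShuffle (σ ∘ e)} Set.univ := by
  refine ⟨Set.mapsTo_univ _ _, fun σ hσ τ hτ hστ => ?_, fun q _ => ?_⟩
  · obtain ⟨s, t, hst⟩ := mk_eq_mk_modSumCongr_iff.mp hστ
    have τ_comp : τ ∘ e = (σ ∘ e) ∘ Sum.map s t := by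
      ext k
      simpa using congrArg e (Equiv.congr_fun hst k)
    have comp_eq := hσ.comp_sumMap_eq (s := s) (t := t) (by rwa [← τ_comp])
    exact DFunLike.coe_injective (e.surjective.injective_comp_right (τ_comp.trans comp_eq).symm)
  · obtain ⟨ρ, rfl⟩ := QuotientGroup.mk_surjective q
    obtain ⟨s, t, hst⟩ := exists_isShuffle_comp_sumMap (e.injective.comp ρ.injective)
    refine ⟨e.permCongr (ρ * sumCongr s t), ?_, ?_⟩
    · have h : e.permCongr (ρ * sumCongr s t) ∘ e = (e ∘ ρ) ∘ Sum.map s t := by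
        ext k
        simp
      rwa [Set.mem_ofPred_eq, h]
    · refine (mk_eq_mk_modSumCongr_iff.mpr ⟨s, t, ?_⟩).symm
      ext k
      simp

end Shuffle

section ShuffleFormula

open scoped Classical in
theorem domCoprod_domDomCongr_apply_eq_sum_isShuffle {ι κ γ R M N₁ N₂ : Type*}
    [LinearOrder ι] [LinearOrder κ] [LinearOrder γ] [Fintype ι] [Fintype κ] [Fintype γ]
    [CommSemiring R] [AddCommMonoid M] [Module R M] [AddCommGroup N₁] [Module R N₁]
    [AddCommGroup N₂] [Module R N₂] (f : M [⋀^ι]→ₗ[R] N₁) (g : M [⋀^κ]→ₗ[R] N₂)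
    (e : ι ⊕ κ ≃ γ) (x : γ → M) :
    (f.domCoprod g).domDomCongr e x = ∑ σ ∈ {σ : Perm γ | IsShuffle (σ ∘ e)},
      sign σ • (f (x ∘ σ ∘ e ∘ Sum.inl) ⊗ₜ[R] g (x ∘ σ ∘ e ∘ Sum.inr)) := by
  rw [AlternatingMap.domDomCongr_apply, AlternatingMap.domCoprod_apply, sum_apply]
  obtain ⟨_, hinj, hsurj⟩ := bijOn_mk_modSumCongr_isShuffle e
  symm
  refine Finset.sum_nbij _ (by simp) (by simpa using hinj) (by simpa using hsurj) fun σ _ => ?_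
  simp [AlternatingMap.domCoprod.summand, Function.comp_def]

variable {R V W : Type*} [CommRing R] [AddCommGroup V] [Module R V] [AddCommGroup W] [Module R W]
  {ι : Type*} [Fintype ι] {m : ℕ}

/-- The insertion product `A ∘ B`, as an alternating map in the arguments of `B` followed by the
remaining arguments of `A`. -/
noncomputable def insertion [DecidableEq ι] (A : V [⋀^Fin (m + 1)]→ₗ[R] W)
    (B : V [⋀^ι]→ₗ[R] V) : V [⋀^ι ⊕ Fin m]→ₗ[R] W :=
  (TensorProduct.lift
    (exteriorPower.alternatingMapLinearEquiv.toLinearMap ∘ₗ A.curryLeft)).compAlternatingMap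
      (B.domCoprod (exteriorPower.ιMulti R m))

open scoped Classical in
theorem insertion_domDomCongr_apply_eq_sum_isShuffle {γ : Type*} [LinearOrder ι] [LinearOrder γ]
    [Fintype γ] (A : V [⋀^Fin (m + 1)]→ₗ[R] W) (B : V [⋀^ι]→ₗ[R] V) (e : ι ⊕ Fin m ≃ γ)
    (x : γ → V) :
    (insertion A B).domDomCongr e x = ∑ σ ∈ {σ : Perm γ | IsShuffle (σ ∘ e)},
      sign σ • A (Matrix.vecCons (B (x ∘ σ ∘ e ∘ Sum.inl)) (x ∘ σ ∘ e ∘ Sum.inr)) := by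
  have shuffle_sum := domCoprod_domDomCongr_apply_eq_sum_isShuffle B (exteriorPower.ιMulti R m) e x
  rw [AlternatingMap.domDomCongr_apply] at shuffle_sum ⊢
  rw [insertion, LinearMap.compAlternatingMap_apply, shuffle_sum]
  simp [Units.smul_def]

end ShuffleFormula

section Encoding

/-- The identification of two consecutive blocks of sizes `p` and `q` with `Fin n`. The equation
`p + q = n` is an argument because the arities `a + b - 1` of `ins` are not syntactically sums. -/
def blockEquiv {p q n : ℕ} (h : p + q = n) : Fin p ⊕ Fin q ≃ Fin n :=
  finSumFinEquiv.trans (finCongr h)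

theorem blockEquiv_inl {p q n : ℕ} (h : p + q = n) (i : Fin p) :
    blockEquiv h (Sum.inl i) = ⟨i, by omega⟩ := by
  ext
  simp [blockEquiv]

theorem blockEquiv_inr {p q n : ℕ} (h : p + q = n) (j : Fin q) :
    blockEquiv h (Sum.inr j) = ⟨p + j, by omega⟩ := by
  ext
  simp [blockEquiv]

theorem isShuffle_comp_blockEquiv_iff {α : Type*} [Preorder α] {p q n : ℕ} (h : p + q = n)
    (f : Fin n → α) :
    IsShuffle (f ∘ blockEquiv h) ↔
      (∀ i j : Fin n, i < j → (j : ℕ) < p → f i < f j) ∧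
      (∀ i j : Fin n, i < j → p ≤ (i : ℕ) → f i < f j) := by
  have p_not_le (i : Fin p) : ¬ p ≤ i := i.is_lt.not_ge
  have add_not_lt (i : Fin p) (j : ℕ) : ¬ p + j < i := by omega
  simp only [(blockEquiv h).symm.forall_congr_left, Sum.forall, Equiv.symm_symm]
  simp [IsShuffle, StrictMono, blockEquiv_inl, blockEquiv_inr, p_not_le, add_not_lt]

open scoped Classical in
theorem ins_succ_ext_apply_eq_sum_isShuffle {V : Type*} [AddCommGroup V] {m b : ℕ}
    (f : (Fin (m + 1) → V) → V) (g : (Fin b → V) → V) (h : b + m = m + 1 + b - 1) (x : ℕ → V) :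
    ins (m + 1) b (ext f) (ext g) x =
      ∑ σ ∈ {σ : Perm (Fin (m + 1 + b - 1)) | IsShuffle (σ ∘ blockEquiv h)},
        sign σ • f (Matrix.vecCons (g fun i => x (σ (blockEquiv h (Sum.inl i))))
          fun j => x (σ (blockEquiv h (Sum.inr j)))) := by
  rw [ins, dif_neg (Nat.succ_ne_zero m)]
  refine Finset.sum_congr (by ext σ; simp [isShuffle_comp_blockEquiv_iff]) fun σ _ => ?_
  rw [Units.smul_def]
  congr 1
  refine congrArg f (funext fun i => ?_)
  induction i using Fin.cases with
  | zero =>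
    refine congrArg g (funext fun k => ?_)
    simp [blockEquiv_inl]
  | succ j =>
    have hj : b + j < m + b := by omega
    simp [blockEquiv_inr, hj]

end Encoding

section Nijenhuis

theorem nij_anticomm {V : Type*} [AddCommGroup V] (a b : ℕ) (f g : (ℕ → V) → V) :
    nij a b f g = fun x =>
      -((Int.negOnePow (((a : ℤ) - 1) * ((b : ℤ) - 1)) : ℤ) • nij b a g f x) := by
  funext x
  simp only [nij, mul_comm ((b : ℤ) - 1), ← Units.smul_def, smul_sub, smul_smul,
    Int.units_mul_self, one_smul, neg_sub]

variable {R V : Type*} [CommRing R] [AddCommGroup V] [Module R V] {a b : ℕ}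

theorem exists_ext_eq_ins (A : V [⋀^Fin a]→ₗ[R] V) (B : V [⋀^Fin b]→ₗ[R] V) :
    ∃ C : V [⋀^Fin (a + b - 1)]→ₗ[R] V, ext C = ins a b (ext A) (ext B) := by
  obtain _ | m := a
  · exact ⟨0, by funext x; simp [ext, ins]⟩
  · have h : b + m = m + 1 + b - 1 := by omega
    refine ⟨(insertion A B).domDomCongr (blockEquiv h), funext fun x => ?_⟩
    rw [ins_succ_ext_apply_eq_sum_isShuffle _ _ h]
    exact insertion_domDomCongr_apply_eq_sum_isShuffle A B (blockEquiv h) fun i => x i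

theorem exists_ext_eq_nij (A : V [⋀^Fin a]→ₗ[R] V) (B : V [⋀^Fin b]→ₗ[R] V) :
    ∃ D : V [⋀^Fin (a + b - 1)]→ₗ[R] V, ext D = nij a b (ext A) (ext B) := by
  obtain ⟨C, hC⟩ := exists_ext_eq_ins A B
  have hBA := exists_ext_eq_ins B A
  rw [add_comm b a] at hBA
  obtain ⟨C', hC'⟩ := hBA
  refine ⟨C - (Int.negOnePow (((a : ℤ) - 1) * ((b : ℤ) - 1)) : ℤ) • C', funext fun x => ?_⟩
  rw [nij, ← hC, ← hC']
  rfl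

end Nijenhuis

/-- for alternating multilinear `A ∈ C^a(V)` (with `a ≥ 1`) and `B ∈ C^b(V)`,
the insertion product `A∘B` is again alternating multilinear, i.e. `A∘B ∈ C^{a+b-1}(V)`;
consequently the Nijenhuis bracket `[A,B]` lies in `C^{a+b-1}(V)` and satisfies the graded
anticommutativity `[A,B] = −(−1)^{(a−1)(b−1)} [B,A]`. -/
theorem insertion_alternating_and_nij_anticomm
    {R : Type*} [CommRing R] {V : Type*} [AddCommGroup V] [Module R V]
    (a b : ℕ) (ha : 1 ≤ a)
    (A : AlternatingMap R V V (Fin a)) (B : AlternatingMap R V V (Fin b)) :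
    (∃ C : AlternatingMap R V V (Fin (a + b - 1)),
        ext (⇑C) = ins a b (ext ⇑A) (ext ⇑B)) ∧
    (∃ D : AlternatingMap R V V (Fin (a + b - 1)),
        ext (⇑D) = nij a b (ext ⇑A) (ext ⇑B)) ∧
    nij a b (ext ⇑A) (ext ⇑B) = fun x =>
      -((Int.negOnePow (((a : ℤ) - 1) * ((b : ℤ) - 1)) : ℤ) •
          nij b a (ext ⇑B) (ext ⇑A) x) :=
  ⟨exists_ext_eq_ins A B, exists_ext_eq_nij A B, nij_anticomm a b (ext A) (ext B)⟩
end

section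
/- Let V be a vector space over a field K of characteristic 0 and let μ ∈ C^2(V) be an alternating bilinear map with μ∘μ = 0 (equivalently, a Lie algebra structure on V). Then the operator D : C^a(V) → C^{a+1}(V) defined by D(A) := [μ, A] (Nijenhuis bracket) satisfies D∘D = 0, i.e. [μ,[μ,A]] = 0 for all A ∈ C^a(V). -/
/-!
The space `V` is a Lie ring with bracket `μ`, and on antisymmetric cochains the bracket with `μ` is,
up to sign, the Chevalley–Eilenberg differential `D` of the adjoint module. Cochains are equal as
soon as all their interior products `ι_v` agree, so Cartan's formula `ι_v D = L_v - D ι_v` and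
`ι_u L_v = L_v ι_u - ι_[v,u]` turn identities between `D` and the Lie derivatives `L_v` into
identities in lower degree. In this way induction on the degree gives first
`L_[u,v] = L_u L_v - L_v L_u`, then `L_v D = D L_v`, and finally
`ι_v D D = L_v D - D ι_v D = D D ι_v`, whence `D D = 0`.
-/

section InteriorProduct

variable {L M : Type*} [AddCommGroup M] {n : ℕ}

/-- The interior product `ι_v` on not necessarily alternating or multilinear cochains `L^n → M`. -/
def contract (v : L) : ((Fin (n + 1) → L) → M) →+ ((Fin n → L) → M) where
  toFun f x := f (Fin.cons v x)
  map_zero' := rfl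
  map_add' _ _ := rfl

theorem contract_apply (v : L) (f : (Fin (n + 1) → L) → M) (x : Fin n → L) :
    contract v f x = f (Fin.cons v x) := rfl

theorem ext_contract {f g : (Fin (n + 1) → L) → M} (h : ∀ v, contract v f = contract v g) :
    f = g := by
  funext x
  rw [← Fin.cons_self_tail x]
  exact congrFun (h (x 0)) (Fin.tail x)

variable {R : Type*} [CommSemiring R] [AddCommGroup L] [Module R L] [Module R M]

theorem contract_sub_left (f : MultilinearMap R (fun _ : Fin (n + 1) => L) M) (u v : L) :
    contract (u - v) f = contract u f - contract v f :=
  congrArg DFunLike.coe (map_sub f.curryLeft u v)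

theorem contract_neg_left (f : MultilinearMap R (fun _ : Fin (n + 1) => L) M) (v : L) :
    contract (-v) f = -contract v f :=
  congrArg DFunLike.coe (map_neg f.curryLeft v)

end InteriorProduct

section Antisymmetry

variable {L M : Type*} [AddCommGroup M] {n : ℕ}

/-- Antisymmetry of a cochain under exchange of adjacent arguments, by recursion on the degree so
that interior products inherit it by definition. -/
def IsSkew : ∀ {n : ℕ}, ((Fin n → L) → M) → Prop
  | 0, _ => True
  | 1, _ => True
  | _ + 2, f => (∀ u v, contract u (contract v f) = -contract v (contract u f)) ∧
      ∀ v, IsSkew (contract v f)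

namespace IsSkew

theorem sub {f g : (Fin n → L) → M} (hf : IsSkew f) (hg : IsSkew g) : IsSkew (f - g) := by
  induction n using Nat.twoStepInduction with
  | zero => trivial
  | one => trivial
  | more n _ ih =>
    refine ⟨fun u v => ?_, fun v => ?_⟩
    · simp only [map_sub, hf.1 u v, hg.1 u v]
      abel
    · rw [map_sub]
      exact ih (hf.2 v) (hg.2 v)

theorem zsmul {f : (Fin n → L) → M} (hf : IsSkew f) (c : ℤ) : IsSkew (c • f) := by
  induction n using Nat.twoStepInduction with
  | zero => trivial
  | one => trivial
  | more n _ ih =>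
    refine ⟨fun u v => ?_, fun v => ?_⟩
    · simp only [map_zsmul, hf.1 u v, smul_neg]
    · rw [map_zsmul]
      exact ih (hf.2 v)

theorem map_insertNth {f : (Fin (n + 1) → L) → M} (hf : IsSkew f) (i : Fin (n + 1)) (v : L)
    (x : Fin n → L) :
    f (i.insertNth v x) = (-1 : ℤ) ^ (i : ℕ) • f (Fin.cons v x) := by
  induction n with
  | zero => simp [Fin.fin_one_eq_zero i]
  | succ n ih =>
    cases i using Fin.cases with
    | zero => simp
    | succ i =>
      cases x using Fin.consCases with | cons a x =>
      have swap : f (Fin.cons a (Fin.cons v x)) = -f (Fin.cons v (Fin.cons a x)) :=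
        congrFun (hf.1 v a) x
      rw [Fin.insertNth_succ_cons, ← contract_apply a f, ih (hf.2 a), contract_apply, swap,
        Fin.val_succ, pow_succ, mul_neg_one, neg_smul, smul_neg]

theorem map_update {f : (Fin (n + 1) → L) → M} (hf : IsSkew f) (x : Fin (n + 1) → L)
    (i : Fin (n + 1)) (v : L) :
    f (Function.update x i v) = (-1 : ℤ) ^ (i : ℕ) • f (Fin.cons v (i.removeNth x)) := by
  rw [← Fin.insertNth_removeNth, hf.map_insertNth]

end IsSkew

variable {R : Type*} [CommSemiring R] [AddCommGroup L] [Module R L] [Module R M]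

theorem isSkew_coe_alternatingMap (A : L [⋀^Fin n]→ₗ[R] M) : IsSkew A := by
  induction n using Nat.twoStepInduction with
  | zero => trivial
  | one => trivial
  | more n _ ih =>
    refine ⟨fun u v => ?_, fun v => ih (A.curryLeft v)⟩
    have polarized : (A.curryLeft u).curryLeft v + (A.curryLeft v).curryLeft u = 0 := by
      simpa using A.curryLeft_same (u + v)
    exact congrArg DFunLike.coe (eq_neg_of_add_eq_zero_right polarized)

end Antisymmetry

section CartanCalculus

variable {L M : Type*} [LieRing L] [AddCommGroup M] {n : ℕ}

theorem contract_lie_swap {R : Type*} [CommSemiring R] [Module R L] [Module R M] (u v : L)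
    (f : MultilinearMap R (fun _ : Fin (n + 1) => L) M) :
    contract ⁅u, v⁆ f = -contract ⁅v, u⁆ f := by
  rw [← lie_skew, contract_neg_left]

variable [LieRingModule L M]

/-- The Lie derivative `L_v` on cochains `L^n → M`, by the action of `L` on `M` and, in each
argument, the adjoint action. -/
def lieDerivative (v : L) : ((Fin n → L) → M) →+ ((Fin n → L) → M) where
  toFun f x := ⁅v, f x⁆ - ∑ i, f (Function.update x i ⁅v, x i⁆)
  map_zero' := by ext; simp
  map_add' f g := by
    ext x
    simp only [Pi.add_apply, lie_add, Finset.sum_add_distrib]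
    abel

theorem lieDerivative_apply (v : L) (f : (Fin n → L) → M) (x : Fin n → L) :
    lieDerivative v f x = ⁅v, f x⁆ - ∑ i, f (Function.update x i ⁅v, x i⁆) := rfl

/-- The Chevalley–Eilenberg differential, in Loday's form: `⁅x i, x j⁆` with `i < j` replaces `x j`
instead of being moved to the front. It makes sense without antisymmetry of the cochain, and needs
no case distinction in degree `0`. -/
def differential : ((Fin n → L) → M) →+ ((Fin (n + 1) → L) → M) where
  toFun f x := ∑ i : Fin (n + 1), (-1 : ℤ) ^ (i : ℕ) • (⁅x i, f (i.removeNth x)⁆ -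
    ∑ j, if i < i.succAbove j then
      f (Function.update (i.removeNth x) j ⁅x i, x (i.succAbove j)⁆) else 0)
  map_zero' := by ext; simp
  map_add' f g := by
    ext x
    simp only [Pi.add_apply, lie_add, ← Finset.sum_add_distrib, ← smul_add]
    refine Finset.sum_congr rfl fun i _ => congrArg _ ?_
    simp only [ite_add_zero, Finset.sum_add_distrib]
    abel

theorem differential_apply (f : (Fin n → L) → M) (x : Fin (n + 1) → L) :
    differential f x = ∑ i : Fin (n + 1), (-1 : ℤ) ^ (i : ℕ) • (⁅x i, f (i.removeNth x)⁆ -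
      ∑ j, if i < i.succAbove j then
        f (Function.update (i.removeNth x) j ⁅x i, x (i.succAbove j)⁆) else 0) := rfl

theorem contract_lieDerivative (u v : L) (f : (Fin (n + 1) → L) → M) :
    contract u (lieDerivative v f) = lieDerivative v (contract u f) - contract ⁅v, u⁆ f := by
  ext x
  simp only [Pi.sub_apply, contract_apply, lieDerivative_apply, Fin.sum_univ_succ, Fin.cons_zero,
    Fin.cons_succ, Fin.update_cons_zero, Fin.cons_update]
  abel

theorem contract_differential_of_degree_zero (v : L) (f : (Fin 0 → L) → M) :
    contract v (differential f) = lieDerivative v f := by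
  ext x
  simp [contract_apply, differential_apply, lieDerivative_apply, Subsingleton.elim _ x]

theorem contract_differential (v : L) (f : (Fin (n + 1) → L) → M) :
    contract v (differential f) = lieDerivative v f - differential (contract v f) := by
  ext x
  have removeNth_cons_succ (i : Fin (n + 1)) :
      i.succ.removeNth (Fin.cons v x : Fin (n + 2) → L) = Fin.cons v (i.removeNth x) := by
    ext j
    cases j using Fin.cases <;> simp [Fin.removeNth]
  rw [contract_apply, Pi.sub_apply, sub_eq_add_neg (lieDerivative v f x), differential_apply,
    differential_apply, Fin.sum_univ_succ, ← Finset.sum_neg_distrib]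
  congr 1
  · simp [lieDerivative_apply]
  · refine Finset.sum_congr rfl fun i _ => ?_
    rw [Fin.sum_univ_succ]
    simp [removeNth_cons_succ, contract_apply, ← Fin.cons_update, pow_succ]

theorem IsSkew.lieDerivative {f : (Fin n → L) → M} (hf : IsSkew f) (v : L) :
    IsSkew (lieDerivative v f) := by
  induction n using Nat.twoStepInduction with
  | zero => trivial
  | one => trivial
  | more n _ ih =>
    refine ⟨fun a b => ?_, fun a => ?_⟩
    · simp only [contract_lieDerivative, map_sub, hf.1 a b, hf.1 ⁅v, a⁆ b, hf.1 a ⁅v, b⁆, map_neg]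
      abel
    · rw [contract_lieDerivative]
      exact (ih (hf.2 a)).sub (hf.2 _)

variable {R : Type*} [CommSemiring R] [Module R L] [Module R M]

theorem lieDerivative_lie (u v : L) (f : MultilinearMap R (fun _ : Fin n => L) M) :
    lieDerivative ⁅u, v⁆ f =
      lieDerivative u (lieDerivative v f) - lieDerivative v (lieDerivative u f) := by
  induction n with
  | zero =>
    ext x
    simp [lieDerivative_apply, lie_lie]
  | succ n ih =>
    refine ext_contract fun w => ?_
    have ih_contract : lieDerivative ⁅u, v⁆ (contract w f) =
        lieDerivative u (lieDerivative v (contract w f)) -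
          lieDerivative v (lieDerivative u (contract w f)) := ih (f.curryLeft w)
    have jacobi : contract ⁅⁅u, v⁆, w⁆ f = contract ⁅u, ⁅v, w⁆⁆ f - contract ⁅v, ⁅u, w⁆⁆ f := by
      rw [lie_lie, contract_sub_left]
    simp only [map_sub, contract_lieDerivative, ih_contract, jacobi]
    abel

theorem lieDerivative_differential (v : L) (f : MultilinearMap R (fun _ : Fin n => L) M) :
    lieDerivative v (differential f) = differential (lieDerivative v f) := by
  induction n with
  | zero =>
    refine ext_contract fun u => ?_
    rw [contract_lieDerivative]
    simp only [contract_differential_of_degree_zero, lieDerivative_lie]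
    abel
  | succ n ih =>
    refine ext_contract fun u => ?_
    have ih_contract : lieDerivative v (differential (contract u f)) =
      differential (lieDerivative v (contract u f)) := ih (f.curryLeft u)
    simp only [map_sub, contract_lieDerivative, contract_differential, ih_contract,
      lieDerivative_lie]
    abel

theorem differential_differential (f : MultilinearMap R (fun _ : Fin n => L) M) :
    differential (differential f) = 0 := by
  induction n with
  | zero =>
    refine ext_contract fun v => ?_
    rw [contract_differential, contract_differential_of_degree_zero, lieDerivative_differential,
      sub_self, map_zero]
  | succ n ih =>
    refine ext_contract fun v => ?_
    have ih_contract : differential (differential (contract v f)) = 0 := ih (f.curryLeft v)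
    rw [contract_differential, contract_differential, map_sub, lieDerivative_differential,
      ih_contract, sub_zero, sub_self, map_zero]

theorem isSkew_differential (f : MultilinearMap R (fun _ : Fin n => L) M) (hf : IsSkew f) :
    IsSkew (differential f) := by
  induction n using Nat.twoStepInduction with
  | zero => trivial
  | one =>
    refine ⟨fun u v => ?_, fun _ => trivial⟩
    rw [contract_differential, contract_differential, map_sub, map_sub, contract_lieDerivative,
      contract_lieDerivative, contract_differential_of_degree_zero,
      contract_differential_of_degree_zero, contract_lie_swap u v f]
    abel
  | more n _ ih =>
    refine ⟨fun u v => ?_, fun v => ?_⟩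
    · rw [contract_differential, contract_differential, map_sub, map_sub, contract_lieDerivative,
        contract_lieDerivative, contract_differential, contract_differential,
        contract_lie_swap u v f, hf.1 u v, map_neg]
      abel
    · rw [contract_differential]
      exact (hf.lieDerivative v).sub (ih (f.curryLeft v) (hf.2 v))

end CartanCalculus

section Unshuffles

/-- `σ` is a `(b, N - b)`-unshuffle: increasing on the first `b` positions and on the remaining
ones. It is spelled as in `ins`, so that the sums there range over it by definition. -/
abbrev IsUnshuffle {N : ℕ} (b : ℕ) (σ : Equiv.Perm (Fin N)) : Prop :=
  (∀ i j : Fin N, i < j → (j : ℕ) < b → σ i < σ j) ∧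
    (∀ i j : Fin N, i < j → b ≤ (i : ℕ) → σ i < σ j)

theorem IsUnshuffle.eq_of_image_eq {N b : ℕ} {σ τ : Equiv.Perm (Fin N)} (hσ : IsUnshuffle b σ)
    (hτ : IsUnshuffle b τ) (h : σ '' {k | k < b} = τ '' {k | k < b}) : σ = τ := by
  have eqOn {s : Set (Fin N)} (hσs : StrictMonoOn σ s) (hτs : StrictMonoOn τ s)
      (hs : σ '' s = τ '' s) : Set.EqOn σ τ s := by
    rw [Set.image_eq_range, Set.image_eq_range] at hs
    have restrict_eq := (StrictMono.range_inj (f := fun k : s => σ k) (g := fun k : s => τ k)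
      (fun i j hij => hσs i.2 j.2 hij) fun i j hij => hτs i.2 j.2 hij).mp hs
    exact fun k hk => congrFun restrict_eq ⟨k, hk⟩
  ext1 k
  by_cases hk : (k : ℕ) < b
  · exact eqOn (fun i _ j hj hij => hσ.1 i j hij hj) (fun i _ j hj hij => hτ.1 i j hij hj) h hk
  · refine eqOn (s := {k : Fin N | (k : ℕ) < b}ᶜ)
      (fun i hi j _ hij => hσ.2 i j hij (not_lt.mp hi))
      (fun i hi j _ hij => hτ.2 i j hij (not_lt.mp hi)) ?_ hk
    rw [Set.image_compl_eq σ.bijective, Set.image_compl_eq τ.bijective, h]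

/-- The `(b, 1)`-unshuffle with last value `i`. -/
def unshuffleLast {b : ℕ} (i : Fin (b + 1)) : Equiv.Perm (Fin (b + 1)) :=
  i.cycleRange.symm * finRotate (b + 1)

section UnshuffleLast

variable {b : ℕ} (i : Fin (b + 1))

theorem unshuffleLast_last : unshuffleLast i (Fin.last b) = i := by
  simp [unshuffleLast]

theorem unshuffleLast_castSucc (k : Fin b) : unshuffleLast i k.castSucc = i.succAbove k := by
  rw [unshuffleLast, Equiv.Perm.mul_apply, finRotate_apply, Fin.coeSucc_eq_succ,
    Fin.cycleRange_symm_succ]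

theorem sign_unshuffleLast :
    ((Equiv.Perm.sign (unshuffleLast i) : ℤˣ) : ℤ) = (-1) ^ b * (-1) ^ (i : ℕ) := by
  simp [unshuffleLast, mul_comm]

theorem isUnshuffle_unshuffleLast : IsUnshuffle b (unshuffleLast i) := by
  refine ⟨fun k l hkl hl => ?_, fun k l hkl hk => ?_⟩
  · have hk : (k : ℕ) < b := lt_trans hkl hl
    have := Fin.strictMono_succAbove i (show k.castLT hk < l.castLT hl from hkl)
    rwa [← unshuffleLast_castSucc, ← unshuffleLast_castSucc] at this
  · exact absurd (hk.trans_lt hkl) (not_lt.mpr l.is_le)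

end UnshuffleLast

theorem sum_isUnshuffle_one {M : Type*} [AddCommMonoid M] {b : ℕ}
    (F : Equiv.Perm (Fin (b + 1)) → M) :
    ∑ σ with IsUnshuffle b σ, F σ = ∑ i, F (unshuffleLast i) := by
  have first_eq_compl_last : {k : Fin (b + 1) | (k : ℕ) < b} = {Fin.last b}ᶜ := by
    ext k
    simp [← Fin.lt_last_iff_ne_last, Fin.lt_def]
  have unshuffleLast_eq {σ : Equiv.Perm (Fin (b + 1))} (hσ : IsUnshuffle b σ) :
      unshuffleLast (σ (Fin.last b)) = σ := by
    refine (isUnshuffle_unshuffleLast _).eq_of_image_eq hσ ?_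
    rw [first_eq_compl_last, Set.image_compl_eq (Equiv.bijective _),
      Set.image_compl_eq σ.bijective, Set.image_singleton, Set.image_singleton, unshuffleLast_last]
  symm
  exact Finset.sum_nbij' unshuffleLast (fun σ => σ (Fin.last b))
    (fun i _ => by simpa using isUnshuffle_unshuffleLast i) (by simp)
    (fun i _ => unshuffleLast_last i)
    (fun σ hσ => unshuffleLast_eq (Finset.mem_filter.mp hσ).2) fun _ _ => rfl

/-- The permutation with values `i`, `i.succAbove j` in the first two positions and increasing
afterwards. -/
def unshufflePair {m : ℕ} (i : Fin (m + 2)) (j : Fin (m + 1)) : Equiv.Perm (Fin (m + 2)) :=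
  i.cycleRange.symm * Equiv.Perm.decomposeFin.symm (0, j.cycleRange.symm)

section UnshufflePair

variable {m : ℕ} (i : Fin (m + 2)) (j : Fin (m + 1))

theorem unshufflePair_zero : unshufflePair i j 0 = i := by
  simp [unshufflePair]

theorem unshufflePair_one : unshufflePair i j 1 = i.succAbove j := by
  rw [unshufflePair, Equiv.Perm.mul_apply, ← Fin.succ_zero_eq_one,
    Equiv.Perm.decomposeFin_symm_apply_succ]
  simp

theorem unshufflePair_succ_succ (k : Fin m) :
    unshufflePair i j k.succ.succ = i.succAbove (j.succAbove k) := by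
  simp [unshufflePair]

theorem sign_unshufflePair :
    ((Equiv.Perm.sign (unshufflePair i j) : ℤˣ) : ℤ) = (-1) ^ (i + j : ℕ) := by
  simp [unshufflePair, pow_add, Equiv.Perm.decomposeFin.symm_sign]

variable {i j}

theorem isUnshuffle_unshufflePair (hij : i < i.succAbove j) :
    IsUnshuffle 2 (unshufflePair i j) := by
  have exists_succ_succ {k : Fin (m + 2)} (hk : 2 ≤ (k : ℕ)) : ∃ k' : Fin m, k = k'.succ.succ :=
    ⟨⟨k - 2, by omega⟩, Fin.ext (by simp only [Fin.val_succ]; omega)⟩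
  refine ⟨fun k l hkl hl => ?_, fun k l hkl hk => ?_⟩
  · obtain rfl : k = 0 := Fin.ext (by rw [Fin.val_zero]; omega)
    obtain rfl : l = 1 := Fin.ext (by rw [Fin.val_one]; omega)
    rwa [unshufflePair_zero, unshufflePair_one]
  · obtain ⟨k, rfl⟩ := exists_succ_succ hk
    obtain ⟨l, rfl⟩ := exists_succ_succ (hk.trans hkl.le)
    rw [unshufflePair_succ_succ, unshufflePair_succ_succ]
    exact Fin.strictMono_succAbove _ (Fin.strictMono_succAbove _ (by simpa using hkl))

end UnshufflePair

theorem sum_isUnshuffle_two {M : Type*} [AddCommMonoid M] {m : ℕ}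
    (F : Equiv.Perm (Fin (m + 2)) → M) :
    ∑ σ with IsUnshuffle 2 σ, F σ =
      ∑ i, ∑ j, if i < i.succAbove j then F (unshufflePair i j) else 0 := by
  have first_eq_pair : {k : Fin (m + 2) | (k : ℕ) < 2} = {0, 1} := by
    ext k
    simp only [Set.mem_ofPred_eq, Set.mem_insert_iff, Set.mem_singleton_iff, Fin.ext_iff,
      Fin.val_zero, Fin.val_one]
    omega
  rw [← Finset.sum_product', Finset.univ_product_univ, ← Finset.sum_filter]
  symm
  refine Finset.sum_nbij (fun p => unshufflePair p.1 p.2)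
    (fun p hp => ?_) (fun p _ q _ hpq => ?_) (fun σ hσ => ?_) fun _ _ => rfl
  · simpa using isUnshuffle_unshufflePair (Finset.mem_filter.mp hp).2
  · have apply_zero_eq := DFunLike.congr_fun hpq 0
    have apply_one_eq := DFunLike.congr_fun hpq 1
    simp only [unshufflePair_zero, unshufflePair_one] at apply_zero_eq apply_one_eq
    rw [apply_zero_eq] at apply_one_eq
    exact Prod.ext apply_zero_eq (Fin.succAbove_right_injective apply_one_eq)
  · have isUnshuffle_σ : IsUnshuffle 2 σ := (Finset.mem_filter.mp hσ).2
    have apply_zero_lt : σ 0 < σ 1 := isUnshuffle_σ.1 0 1 (by simp) (by simp)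
    obtain ⟨j, hj⟩ := Fin.exists_succAbove_eq apply_zero_lt.ne'
    rw [← hj] at apply_zero_lt
    refine ⟨(σ 0, j), by simpa using apply_zero_lt,
      (isUnshuffle_unshufflePair apply_zero_lt).eq_of_image_eq isUnshuffle_σ ?_⟩
    rw [first_eq_pair, Set.image_pair, Set.image_pair, unshufflePair_zero, unshufflePair_one, hj]

end Unshuffles

section InsertionProduct

variable {V : Type*} [AddCommGroup V]

theorem ins_ext {a b N : ℕ} (h : b + a = N) (f : (Fin (a + 1) → V) → V) (g : (Fin b → V) → V)
    (x : ℕ → V) :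
    ins (a + 1) b (ext f) (ext g) x =
      ∑ σ : Equiv.Perm (Fin N) with IsUnshuffle b σ, (Equiv.Perm.sign σ : ℤ) •
        f (Fin.cons (g fun k => x (σ ((Fin.castAdd a k).cast h)))
          fun k => x (σ ((Fin.natAdd b k).cast h))) := by
  obtain rfl : a + 1 + b - 1 = N := by omega
  rw [ins, dif_neg a.succ_ne_zero]
  refine Finset.sum_congr rfl fun σ _ => ?_
  congr 1
  refine congrArg f (funext fun k => ?_)
  cases k using Fin.cases with
  | zero => simp [ext, Fin.castAdd, Fin.castLE, Fin.cast]
  | succ k =>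
    have index_lt : b + k < a + b := by omega
    simp only [Fin.val_succ, Nat.add_eq_zero_iff, one_ne_zero, and_false, ↓reduceIte,
      Nat.add_succ_sub_one, Nat.succ_add_sub_one, index_lt, ↓reduceDIte, Fin.cons_succ]
    rfl

theorem ins_two_left_ext {b : ℕ} (m : (Fin 2 → V) → V) (g : (Fin b → V) → V) (x : ℕ → V) :
    ins 2 b (ext m) (ext g) x = (-1 : ℤ) ^ b • ∑ i : Fin (b + 1), (-1 : ℤ) ^ (i : ℕ) •
      m ![g fun k => x (i.succAbove k), x i] := by
  rw [ins_ext rfl, sum_isUnshuffle_one, Finset.smul_sum]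
  refine Finset.sum_congr rfl fun i _ => ?_
  rw [sign_unshuffleLast, mul_smul]
  congr 3
  funext k
  fin_cases k
  · exact congrArg g (funext fun k => congrArg (fun l : Fin _ => x l) (unshuffleLast_castSucc i k))
  · exact congrArg (fun l : Fin _ => x l) (unshuffleLast_last i)

theorem ins_two_two_ext (m : (Fin 2 → V) → V) (u v w : V) :
    ins 2 2 (ext m) (ext m) (fun k => ![u, v, w] (Fin.ofNat 3 k)) =
      m ![m ![v, w], u] - m ![m ![u, w], v] + m ![m ![u, v], w] := by
  have omit_one : (fun k => ![u, v, w] (Fin.succAbove 1 k)) = ![u, w] := by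
    funext k
    fin_cases k <;> rfl
  have omit_two : (fun k => ![u, v, w] (Fin.succAbove 2 k)) = ![u, v] := by
    funext k
    fin_cases k <;> rfl
  simp [ins_two_left_ext, Fin.sum_univ_three, omit_one, omit_two, sub_eq_add_neg]

theorem ins_two_right_ext {n : ℕ} (g : (Fin (n + 1) → V) → V) (m : (Fin 2 → V) → V) (x : ℕ → V) :
    ins (n + 1) 2 (ext g) (ext m) x = ∑ i : Fin (n + 2), ∑ j : Fin (n + 1),
      if i < i.succAbove j then (-1 : ℤ) ^ (i + j : ℕ) •
        g (Fin.cons (m ![x i, x (i.succAbove j)]) fun k => x (i.succAbove (j.succAbove k)))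
      else 0 := by
  rw [ins_ext (Nat.add_comm 2 n), sum_isUnshuffle_two]
  refine Finset.sum_congr rfl fun i _ => Finset.sum_congr rfl fun j _ => ?_
  rw [sign_unshufflePair]
  congr 4
  · refine congrArg m (funext fun k => ?_)
    fin_cases k
    · exact congrArg (fun l : Fin _ => x l) (unshufflePair_zero i j)
    · exact congrArg (fun l : Fin _ => x l) (unshufflePair_one i j)
  · funext k
    rw [← unshufflePair_succ_succ]
    congr 3
    ext
    simp

end InsertionProduct

section Bracket

variable {V : Type*} [LieRing V] {m : (Fin 2 → V) → V} (hm : ∀ u v, m ![u, v] = ⁅u, v⁆)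
  {n : ℕ}

include hm

theorem ins_two_right_ext_lie {g : (Fin n → V) → V} (hg : IsSkew g) (x : ℕ → V) :
    ins n 2 (ext g) (ext m) x = ∑ i : Fin (n + 1), (-1 : ℤ) ^ (i : ℕ) • ∑ j : Fin n,
      if i < i.succAbove j then
        g (Function.update (fun k => x (i.succAbove k)) j ⁅x i, x (i.succAbove j)⁆) else 0 := by
  cases n with
  | zero => simp [ins]
  | succ n =>
    rw [ins_two_right_ext]
    refine Finset.sum_congr rfl fun i _ => ?_
    rw [Finset.smul_sum]
    refine Finset.sum_congr rfl fun j _ => ?_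
    rw [smul_ite, smul_zero, hm, hg.map_update, smul_smul, pow_add]
    rfl

theorem nij_ext_lie {g : (Fin n → V) → V} (hg : IsSkew g) :
    nij 2 n (ext m) (ext g) = ext ((-1 : ℤ) ^ (n + 1) • differential g) := by
  have sign_eq : ((Int.negOnePow (((2 : ℕ) - 1 : ℤ) * ((n : ℤ) - 1)) : ℤˣ) : ℤ) =
      (-1) ^ (n + 1) := by
    rw [show ((2 : ℕ) - 1 : ℤ) * ((n : ℤ) - 1) = ((n + 1 : ℕ) : ℤ) - 2 by push_cast; ring,
      Int.negOnePow_sub, Int.negOnePow_even 2 even_two, Int.negOnePow_def,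
      zpow_natCast]
    simp
  funext x
  have left_eq : ins 2 n (ext m) (ext g) x = (-1 : ℤ) ^ (n + 1) • ∑ i : Fin (n + 1),
      (-1 : ℤ) ^ (i : ℕ) • ⁅x i, g fun k => x (i.succAbove k)⁆ := by
    rw [ins_two_left_ext, pow_succ, mul_smul, neg_one_smul, ← Finset.sum_neg_distrib]
    simp only [hm, ← smul_neg, lie_skew]
  rw [nij, left_eq, sign_eq, ins_two_right_ext_lie hm hg, ← smul_sub, ← Finset.sum_sub_distrib]
  simp only [← smul_sub]
  rfl

theorem nij_nij_ext_lie {R : Type*} [CommSemiring R] [Module R V] (A : V [⋀^Fin n]→ₗ[R] V) :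
    nij 2 (n + 1) (ext m) (nij 2 n (ext m) (ext A)) = 0 := by
  have hA : IsSkew A := isSkew_coe_alternatingMap A
  have hDA : IsSkew (differential A) := isSkew_differential A.toMultilinearMap hA
  have square_zero : differential (differential A) = 0 :=
    differential_differential A.toMultilinearMap
  rw [nij_ext_lie hm hA, nij_ext_lie hm (hDA.zsmul _), map_zsmul, square_zero, smul_zero,
    smul_zero]
  rfl

end Bracket

section LieRingOfBracket

variable {R V : Type*} [CommSemiring R] [AddCommGroup V] [Module R V]

theorem map_pair_swap (μ : V [⋀^Fin 2]→ₗ[R] V) (u v : V) : μ ![u, v] = -μ ![v, u] :=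
  congrFun ((isSkew_coe_alternatingMap μ).1 v u) ![]

/-- The Lie ring structure on `V` with bracket `⁅u, v⁆ = μ(u, v)`, the Jacobi identity being
`μ ∘ μ = 0`. -/
abbrev lieRingOfInsSelfEqZero (μ : V [⋀^Fin 2]→ₗ[R] V) (hμ : ins 2 2 (ext μ) (ext μ) = 0) :
    LieRing V where
  __ := ‹AddCommGroup V›
  bracket u v := μ ![u, v]
  add_lie u v w := μ.map_vecCons_add ![w] u v
  lie_add u v w := by simpa using (μ.curryLeft u).map_vecCons_add ![] v w
  lie_self u := μ.map_eq_zero_of_eq (i := 0) (j := 1) ![u, u] rfl Fin.zero_ne_one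
  leibniz_lie u v w := by
    have jacobi := ins_two_two_ext μ u v w
    rw [hμ, Pi.zero_apply, map_pair_swap μ _ u, map_pair_swap μ _ v] at jacobi
    grind

end LieRingOfBracket

theorem nij_differential_squares_to_zero_general
    {R : Type*} [CommSemiring R] {V : Type*} [AddCommGroup V] [Module R V]
    (μ : V [⋀^Fin 2]→ₗ[R] V) (hμ : ins 2 2 (ext ⇑μ) (ext ⇑μ) = 0)
    (a : ℕ) (A : V [⋀^Fin a]→ₗ[R] V) :
    nij 2 (a + 1) (ext ⇑μ) (nij 2 a (ext ⇑μ) (ext ⇑A)) = 0 :=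
  let _ := lieRingOfInsSelfEqZero μ hμ
  nij_nij_ext_lie (fun _ _ => rfl) A

/-- for a vector space `V` over a field `K` of characteristic 0 and an
alternating bilinear `μ ∈ C^2(V)` with `μ∘μ = 0` (i.e. a Lie algebra structure on `V`),
the operator `D(A) := [μ, A]` (Nijenhuis bracket), `D : C^a(V) → C^{a+1}(V)`, satisfies
`D∘D = 0`: `[μ,[μ,A]] = 0` for all `A ∈ C^a(V)`. -/
theorem nij_differential_squares_to_zero
    {K : Type*} [Field K] [CharZero K] {V : Type*} [AddCommGroup V] [Module K V]
    (μ : AlternatingMap K V V (Fin 2)) (hμ : ins 2 2 (ext ⇑μ) (ext ⇑μ) = 0)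
    (a : ℕ) (A : AlternatingMap K V V (Fin a)) :
    nij 2 (a + 1) (ext ⇑μ) (nij 2 a (ext ⇑μ) (ext ⇑A)) = 0 :=
  nij_differential_squares_to_zero_general μ hμ a A
end

section
/- Let g be a Lie algebra over a field K of characteristic 0 with Lie bracket μ ∈ C^2(g) and differential D := [μ, −]; let Z^a := ker(D : C^a(g) → C^{a+1}(g)) and B^a := im(D : C^{a−1}(g) → C^a(g)) (with B^0 := 0), and H^a := Z^a / B^a. Then the Nijenhuis bracket descends to a well-defined bilinear operation H^a × H^b → H^{a+b−1} (i.e., if A, A' ∈ Z^a with A − A' ∈ B^a and B ∈ Z^b, then [A,B] − [A',B] ∈ B^{a+b−1}), and this induced bracket satisfies graded anticommutativity [α,β] = −(−1)^{(a−1)(b−1)}[β,α] and the graded Jacobi identity [α,[β,γ]] = [[α,β],γ] + (−1)^{(a−1)(b−1)}[β,[α,γ]]; thus ⊕_a H^a, with H^a in degree a−1, is a graded Lie (super)algebra. -/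
section

variable {K : Type*} [Field K] [CharZero K] {L : Type*} [LieRing L] [LieAlgebra K L]

/-- `f` (the extension of an `n`-cochain of the Lie algebra `L`) is a cocycle:
`D f = [μ, f] = 0` where `μ` is (an alternating presentation of) the Lie bracket. -/
def IsCocycle (μ : AlternatingMap K L L (Fin 2)) (n : ℕ) (f : (ℕ → L) → L) : Prop :=
  nij 2 n (ext ⇑μ) f = 0

/-- `f` (the extension of an `n`-cochain of the Lie algebra `L`) lies in
`B^n := im(D : C^{n-1} → C^n)`, with `B^0 := 0`. -/
def IsCoboundary (μ : AlternatingMap K L L (Fin 2)) (n : ℕ) (f : (ℕ → L) → L) : Prop :=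
  (n = 0 ∧ f = 0) ∨
    ∃ (m : ℕ) (P : AlternatingMap K L L (Fin m)),
      n = m + 1 ∧ f = nij 2 m (ext ⇑μ) (ext ⇑P)

/-!
Contraction with a vector is a graded derivation of the insertion product, and a cochain of
nonnegative degree is determined by its contractions. By induction on the total degree the
associator of the insertion product is therefore symmetric up to sign in its last two arguments:
insertion is a graded right pre-Lie product, and its graded commutator, the Nijenhuis bracket,
satisfies the graded Jacobi identity already on cochains. The Jacobi identity also makes
`D = [μ, ·]` a graded derivation of the bracket, so the bracket of a coboundary with a cocycle is a
coboundary.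
-/

namespace Nijenhuis

section Shuffle

variable {V : Type*}

/-- The sequence `x, y 0, y 1, …`. -/
def consSeq (x : V) (y : ℕ → V) : ℕ → V
  | 0 => x
  | n + 1 => y n

@[simp] theorem consSeq_zero (x : V) (y : ℕ → V) : consSeq x y 0 = x := rfl

@[simp] theorem consSeq_succ (x : V) (y : ℕ → V) (n : ℕ) : consSeq x y (n + 1) = y n := rfl

theorem consSeq_head_tail (z : ℕ → V) : consSeq (z 0) (fun i => z (i + 1)) = z := by
  funext i
  cases i <;> rfl

/-- `σ` is a `b`-shuffle: it is increasing on the positions `< b` and on the positions `≥ b`.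
These are the permutations over which `ins` sums. -/
abbrev IsShuffle (b : ℕ) {N : ℕ} (σ : Equiv.Perm (Fin N)) : Prop :=
  (∀ i j : Fin N, i < j → (j : ℕ) < b → σ i < σ j) ∧
    (∀ i j : Fin N, i < j → b ≤ (i : ℕ) → σ i < σ j)

/-- The permutation of `Fin (n + 1)` which sends `p` to `0` and acts as `τ`, shifted by one, on the
remaining positions. Every permutation of `Fin (n + 1)` arises uniquely in this way. -/
def insertZero {n : ℕ} (p : Fin (n + 1)) (τ : Equiv.Perm (Fin n)) : Equiv.Perm (Fin (n + 1)) :=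
  Equiv.Perm.decomposeFin.symm (0, τ) * p.cycleRange

@[simp] theorem insertZero_self {n : ℕ} (p : Fin (n + 1)) (τ : Equiv.Perm (Fin n)) :
    insertZero p τ p = 0 := by
  simp [insertZero]

@[simp] theorem insertZero_succAbove {n : ℕ} (p : Fin (n + 1)) (τ : Equiv.Perm (Fin n))
    (k : Fin n) : insertZero p τ (p.succAbove k) = (τ k).succ := by
  simp [insertZero, Fin.cycleRange_succAbove]

theorem sign_insertZero {n : ℕ} (p : Fin (n + 1)) (τ : Equiv.Perm (Fin n)) :
    Equiv.Perm.sign (insertZero p τ) = (-1) ^ (p : ℕ) * Equiv.Perm.sign τ := by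
  simp [insertZero, mul_comm]

theorem insertZero_bijective (n : ℕ) :
    Function.Bijective fun x : Fin (n + 1) × Equiv.Perm (Fin n) => insertZero x.1 x.2 := by
  refine (Fintype.bijective_iff_injective_and_card _).2 ⟨?_, ?_⟩
  · rintro ⟨p, τ⟩ ⟨p', τ'⟩ h
    dsimp only at h
    obtain rfl : p = p' := (insertZero p τ).injective <| by
      rw [insertZero_self, h, insertZero_self]
    simpa [insertZero] using h
  · simp [Fintype.card_perm, Nat.factorial_succ]

theorem val_succAbove {n : ℕ} (p : Fin (n + 1)) (j : Fin n) :
    (p.succAbove j : ℕ) = if (j : ℕ) < p then (j : ℕ) else j + 1 := by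
  simp only [Fin.succAbove, Fin.lt_def, Fin.val_castSucc]
  split_ifs <;> simp

theorem IsShuffle.eq_zero_or_eq_of_apply_eq_zero {n b : ℕ} {σ : Equiv.Perm (Fin (n + 1))}
    (hσ : IsShuffle b σ) {p : Fin (n + 1)} (hp : σ p = 0) : p = 0 ∧ 0 < b ∨ (p : ℕ) = b := by
  have not_lt (i : Fin (n + 1)) : ¬ σ i < σ p := by simp [hp]
  rcases lt_or_ge (p : ℕ) b with hpb | hpb
  · refine .inl ⟨?_, by omega⟩
    by_contra h0
    exact not_lt 0 (hσ.1 0 p (Fin.pos_iff_ne_zero.2 h0) hpb)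
  · by_contra h0
    have hbp : b < p := by omega
    exact not_lt ⟨b, by omega⟩ (hσ.2 ⟨b, by omega⟩ p hbp le_rfl)

@[simp] theorem isShuffle_insertZero_zero {n b : ℕ} {τ : Equiv.Perm (Fin n)} :
    IsShuffle (b + 1) (insertZero 0 τ) ↔ IsShuffle b τ := by
  have insertZero_succ (k : Fin n) : insertZero 0 τ k.succ = (τ k).succ := by
    rw [← Fin.succAbove_zero_apply, insertZero_succAbove]
  simp [IsShuffle, Fin.forall_fin_succ, insertZero_succ]

theorem isShuffle_insertZero_self {n b : ℕ} {p : Fin (n + 1)} {τ : Equiv.Perm (Fin n)}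
    (hp : (p : ℕ) = b) : IsShuffle b (insertZero p τ) ↔ IsShuffle b τ := by
  subst hp
  have lt_iff (j : Fin n) : p.succAbove j < p ↔ (j : ℕ) < p := p.succAbove_lt_iff_castSucc_lt j
  have le_iff (i : Fin n) : p ≤ p.succAbove i ↔ (p : ℕ) ≤ i :=
    not_lt.symm.trans ((lt_iff i).not.trans not_lt)
  simp +contextual [IsShuffle, p.forall_iff_succAbove, lt_iff, le_iff]

theorem sum_isShuffle_succ {M : Type*} [AddCommMonoid M] {n : ℕ} (b : ℕ)
    (F : Equiv.Perm (Fin (n + 1)) → M) :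
    ∑ σ with IsShuffle b σ, F σ
      = (if 0 < b then ∑ τ with IsShuffle (b - 1) τ, F (insertZero 0 τ) else 0)
        + if hb : b < n + 1 then ∑ τ with IsShuffle b τ, F (insertZero ⟨b, hb⟩ τ) else 0 := by
  let G (p : Fin (n + 1)) : M := ∑ τ with IsShuffle b (insertZero p τ), F (insertZero p τ)
  have sum_eq : ∑ σ with IsShuffle b σ, F σ = ∑ p, G p := by
    simp only [G, Finset.sum_filter]
    rw [← (insertZero_bijective n).sum_comp, Fintype.sum_prod_type]
  have G_eq_zero {p : Fin (n + 1)} (hp : ¬ (p = 0 ∧ 0 < b ∨ (p : ℕ) = b)) : G p = 0 :=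
    Finset.sum_eq_zero fun τ hτ => absurd
      ((Finset.mem_filter.1 hτ).2.eq_zero_or_eq_of_apply_eq_zero (insertZero_self p τ)) hp
  have G_self (hb : b < n + 1) :
      G ⟨b, hb⟩ = ∑ τ with IsShuffle b τ, F (insertZero ⟨b, hb⟩ τ) := by
    simp only [G, isShuffle_insertZero_self]
  have G_split (p : Fin (n + 1)) :
      G p = (if p = 0 then if 0 < b then G p else 0 else 0) + if (p : ℕ) = b then G p else 0 := by
    by_cases hp : p = 0 ∧ 0 < b ∨ (p : ℕ) = b
    · rcases hp with ⟨rfl, hb⟩ | hp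
      · simp [hb, hb.ne]
      · have : ¬ (p = 0 ∧ 0 < b) := fun ⟨hp0, hb⟩ => hb.ne (by simpa [hp0] using hp)
        simp [hp, ← ite_and, this]
    · simp only [G_eq_zero hp, ite_self, add_zero]
  rw [sum_eq, Fintype.sum_congr _ _ G_split, Finset.sum_add_distrib,
    Finset.sum_ite_eq' _ 0]
  congr 1
  · rcases b with _ | b <;> simp [G]
  · split_ifs with hb
    · have eq_iff (p : Fin (n + 1)) : (p : ℕ) = b ↔ p = ⟨b, hb⟩ :=
        (Fin.ext_iff (b := ⟨b, hb⟩)).symm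
      simp only [eq_iff, Finset.sum_ite_eq', Finset.mem_univ, if_true, G_self]
    · exact Finset.sum_eq_zero fun p _ => if_neg (by omega)

variable [AddCommGroup V]

/-- The sequence `x ∘ σ`, of which only the first `N` terms are meaningful; the others are `0`. -/
def permSeq {N : ℕ} (σ : Equiv.Perm (Fin N)) (x : ℕ → V) : ℕ → V :=
  fun k => if h : k < N then x (σ ⟨k, h⟩) else 0

/-- The summand `f (g (z 0, …, z (b - 1)), z b, z (b + 1), …)` of the insertion product; the
arguments of `g` beyond its arity `b` are set to `0`. -/
def insTerm (b : ℕ) (f g : (ℕ → V) → V) (z : ℕ → V) : V :=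
  f (consSeq (g fun k => if k < b then z k else 0) fun i => z (b + i))

theorem ins_zero_left (b : ℕ) (f g : (ℕ → V) → V) : ins 0 b f g = 0 := by
  funext x
  simp [ins]

theorem ins_eq_sum {a b N : ℕ} (hN : N + 1 = a + b) (ha : a ≠ 0) (f g : (ℕ → V) → V)
    (x : ℕ → V) :
    ins a b f g x = ∑ σ : Equiv.Perm (Fin N) with IsShuffle b σ,
      Equiv.Perm.sign σ • insTerm b f g (permSeq σ x) := by
  obtain rfl : N = a + b - 1 := by omega
  rw [ins, dif_neg ha]
  refine Finset.sum_congr rfl fun σ _ => ?_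
  rw [Units.smul_def, insTerm]
  congr 2
  funext i
  rcases i with _ | i
  · simp only [if_true, consSeq_zero]
    congr 1
    funext k
    by_cases hk : k < b
    · simp [hk, permSeq, show k < a + b - 1 by omega]
    · simp [hk]
  · simp [permSeq, show b + (i + 1) - 1 = b + i by omega]

theorem permSeq_insertZero {n : ℕ} (p : Fin (n + 1)) (τ : Equiv.Perm (Fin n)) (x : V)
    (y : ℕ → V) (k : ℕ) :
    permSeq (insertZero p τ) (consSeq x y) k =
      if k < p then permSeq τ y k else if k = p then x else permSeq τ y (k - 1) := by
  have apply_succAbove (j : Fin n) : permSeq (insertZero p τ) (consSeq x y) (p.succAbove j) =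
      permSeq τ y j := by
    rw [permSeq, permSeq, dif_pos (p.succAbove j).is_lt, dif_pos j.is_lt, Fin.eta, Fin.eta,
      insertZero_succAbove, Fin.val_succ, consSeq_succ]
  rcases lt_trichotomy k (p : ℕ) with hk | rfl | hk
  · rw [if_pos hk, ← apply_succAbove ⟨k, by omega⟩, val_succAbove, if_pos hk]
  · rw [permSeq, dif_pos p.is_lt, Fin.eta, insertZero_self, Fin.val_zero, consSeq_zero,
      if_neg (lt_irrefl _), if_pos rfl]
  · rw [if_neg hk.not_gt, if_neg hk.ne']
    by_cases hkn : k < n + 1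
    · have hk' : (p.succAbove ⟨k - 1, by omega⟩ : ℕ) = k := by
        rw [val_succAbove, if_neg (by dsimp only; omega)]
        exact Nat.sub_add_cancel (by omega)
      rw [← apply_succAbove ⟨k - 1, by omega⟩, hk']
    · simp [permSeq, hkn, show ¬ k - 1 < n by omega]

theorem insTerm_permSeq_insertZero_zero {n : ℕ} (b : ℕ) (f g : (ℕ → V) → V)
    (τ : Equiv.Perm (Fin n)) (x : V) (y : ℕ → V) :
    insTerm (b + 1) f g (permSeq (insertZero 0 τ) (consSeq x y)) =
      insTerm b f (fun z => g (consSeq x z)) (permSeq τ y) := by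
  rw [insTerm, insTerm]
  congr 2
  · congr 1
    funext k
    cases k <;> simp [permSeq_insertZero]
  · funext i
    simp [permSeq_insertZero, show b + 1 + i - 1 = b + i by omega]

theorem insTerm_permSeq_insertZero_self {n b : ℕ} (hb : b < n + 1) {f : (ℕ → V) → V}
    (hf : ∀ x x' y, f (consSeq x (consSeq x' y)) = -f (consSeq x' (consSeq x y)))
    (g : (ℕ → V) → V) (τ : Equiv.Perm (Fin n)) (x : V) (y : ℕ → V) :
    insTerm b f g (permSeq (insertZero ⟨b, hb⟩ τ) (consSeq x y)) =
      -insTerm b (fun z => f (consSeq x z)) g (permSeq τ y) := by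
  rw [insTerm, insTerm, ← hf]
  congr 2
  · congr 1
    funext k
    by_cases hk : k < b <;> simp [permSeq_insertZero, hk]
  · funext i
    rcases i with _ | i
    · simp [permSeq_insertZero]
    · simp [permSeq_insertZero, ← add_assoc, show ¬ b + i + 1 < b by omega,
        show ¬ b + i + 1 = b by omega]

/-- The first argument of `ins a b f g` ends up either among those of `g` or among those of `f`. -/
theorem ins_consSeq {a b : ℕ} (ha : 0 < a) (hab : 2 ≤ a + b) {f : (ℕ → V) → V}
    (hf : 2 ≤ a → ∀ x x' y, f (consSeq x (consSeq x' y)) = -f (consSeq x' (consSeq x y)))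
    (g : (ℕ → V) → V) (x : V) (y : ℕ → V) :
    ins a b f g (consSeq x y) =
      (if 0 < b then ins a (b - 1) f (fun z => g (consSeq x z)) y else 0)
      + if 2 ≤ a then (-1 : ℤˣ) ^ (b + 1) • ins (a - 1) b (fun z => f (consSeq x z)) g y
        else 0 := by
  obtain ⟨n, hn⟩ : ∃ n, n + 2 = a + b := ⟨a + b - 2, by omega⟩
  rw [ins_eq_sum (N := n + 1) (by omega) (by omega), sum_isShuffle_succ]
  congr 1
  · split_ifs with hb
    · obtain ⟨b, rfl⟩ := Nat.exists_eq_add_of_lt hb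
      rw [ins_eq_sum (N := n) (by omega) (by omega)]
      simp [sign_insertZero, insTerm_permSeq_insertZero_zero]
    · rfl
  · by_cases ha2 : 2 ≤ a
    · have hb : b < n + 1 := by omega
      rw [if_pos ha2, dif_pos hb, ins_eq_sum (N := n) (by omega) (by omega), Finset.smul_sum]
      refine Finset.sum_congr rfl fun τ _ => ?_
      rw [sign_insertZero, insTerm_permSeq_insertZero_self hb (hf ha2)]
      simp [pow_succ, mul_smul]
    · rw [if_neg ha2, dif_neg (by omega)]

theorem isShuffle_zero_iff {n : ℕ} {σ : Equiv.Perm (Fin n)} : IsShuffle 0 σ ↔ σ = 1 := by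
  refine ⟨fun h => ?_, ?_⟩
  · have hσ : StrictMono σ := fun i j hij => h.2 i j hij (Nat.zero_le _)
    exact Equiv.ext fun i => congrFun
      ((hσ.range_inj strictMono_id).1 (by simp)) i
  · rintro rfl
    exact ⟨fun _ _ h _ => h, fun _ _ h _ => h⟩

theorem ins_zero_right {a : ℕ} (ha : 0 < a) (f g : (ℕ → V) → V) (x : ℕ → V) :
    ins a 0 f g x = f (consSeq (g 0) fun i => if i + 1 < a then x i else 0) := by
  obtain ⟨n, rfl⟩ := Nat.exists_eq_add_one.2 ha
  rw [ins_eq_sum (N := n) (by omega) (by omega)]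
  simp [isShuffle_zero_iff, Finset.filter_eq', insTerm, permSeq, Pi.zero_def]

end Shuffle

variable {R : Type*} [CommRing R] {V : Type*} [AddCommGroup V] [Module R V] {p q r : ℤ}
  {f g h : (ℕ → V) → V}

/-- `ext` as a linear map on alternating maps. -/
def extLinearMap (R V : Type*) [CommRing R] [AddCommGroup V] [Module R V] (n : ℕ) :
    (V [⋀^Fin n]→ₗ[R] V) →ₗ[R] ((ℕ → V) → V) where
  toFun A := ext A
  map_add' _ _ := rfl
  map_smul' _ _ := rfl

/-- The space `C^{p+1}` of alternating `(p + 1)`-linear maps on `V`, graded by the degree `p` which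
makes the Nijenhuis bracket additive. It is `V` (the constant functions) if `p = -1`, and `0` if
`p < -1`. -/
def cochain (R V : Type*) [CommRing R] [AddCommGroup V] [Module R V] (p : ℤ) :
    Submodule R ((ℕ → V) → V) :=
  if p < -1 then ⊥ else LinearMap.range (extLinearMap R V (p + 1).toNat)

/-- The contraction `y ↦ f (x, y)` of a cochain `f` of degree `p`. It is set to `0` if `p < 0`, when
`f` has no argument. -/
def contract (p : ℤ) (x : V) : ((ℕ → V) → V) →+ ((ℕ → V) → V) where
  toFun f := if 0 ≤ p then fun y => f (consSeq x y) else 0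
  map_zero' := by split_ifs <;> rfl
  map_add' _ _ := by split_ifs <;> simp [funext_iff]

theorem contract_apply (hp : 0 ≤ p) (x : V) (f : (ℕ → V) → V) (y : ℕ → V) :
    contract p x f y = f (consSeq x y) := by
  simp [contract, hp]

theorem contract_of_neg (hp : p < 0) (x : V) (f : (ℕ → V) → V) : contract p x f = 0 := by
  simp [contract, hp.not_ge]

theorem contract_units_smul (u : ℤˣ) (x : V) (f : (ℕ → V) → V) :
    contract p x (u • f) = u • contract p x f := by
  simp only [Units.smul_def, map_zsmul]

theorem eq_of_contract_eq (hp : 0 ≤ p) (hfg : ∀ x, contract p x f = contract p x g) : f = g := by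
  funext z
  have := congrFun (hfg (z 0)) fun i => z (i + 1)
  rwa [contract_apply hp, contract_apply hp, consSeq_head_tail] at this

theorem ext_injective {n : ℕ} {A B : V [⋀^Fin n]→ₗ[R] V} (hAB : ext A = ext B) : A = B := by
  ext v
  have := congrFun hAB fun k => if hk : k < n then v ⟨k, hk⟩ else 0
  simpa [ext] using this

theorem ext_consSeq {n : ℕ} (A : V [⋀^Fin (n + 1)]→ₗ[R] V) (x : V) (y : ℕ → V) :
    ext A (consSeq x y) = ext (A.curryLeft x) y := by
  refine congrArg A (funext fun i => ?_)
  cases i using Fin.cases <;> rfl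

theorem contract_ext {n : ℕ} (A : V [⋀^Fin (n + 1)]→ₗ[R] V) (x : V) :
    contract n x (ext A) = ext (A.curryLeft x) :=
  funext fun y => (contract_apply n.cast_nonneg _ _ _).trans (ext_consSeq A x y)

theorem mem_cochain_natCast_sub_one {n : ℕ} :
    f ∈ cochain R V ((n : ℤ) - 1) ↔ ∃ A : V [⋀^Fin n]→ₗ[R] V, ext A = f := by
  rw [cochain, if_neg (by omega), sub_add_cancel, Int.toNat_natCast]
  rfl

theorem mem_cochain_natCast {n : ℕ} :
    f ∈ cochain R V n ↔ ∃ A : V [⋀^Fin (n + 1)]→ₗ[R] V, ext A = f := by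
  rw [← mem_cochain_natCast_sub_one, Nat.cast_add_one, add_sub_cancel_right]

theorem ext_mem_cochain {n : ℕ} (A : V [⋀^Fin n]→ₗ[R] V) : ext A ∈ cochain R V ((n : ℤ) - 1) :=
  mem_cochain_natCast_sub_one.2 ⟨A, rfl⟩

theorem eq_zero_of_mem_cochain (hf : f ∈ cochain R V p) (hp : p < -1) : f = 0 := by
  rwa [cochain, if_pos hp, Submodule.mem_bot] at hf

theorem exists_eq_const_of_mem_cochain (hf : f ∈ cochain R V (-1)) : ∃ v : V, f = fun _ => v := by
  obtain ⟨A, rfl⟩ := (mem_cochain_natCast_sub_one (n := 0)).1 hf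
  exact ⟨A ![], funext fun y => congrArg A (Subsingleton.elim _ _)⟩

theorem contract_mem_cochain (hf : f ∈ cochain R V p) (x : V) :
    contract p x f ∈ cochain R V (p - 1) := by
  rcases lt_or_ge p 0 with hp | hp
  · rw [contract_of_neg hp]
    exact zero_mem _
  · lift p to ℕ using hp
    obtain ⟨A, rfl⟩ := mem_cochain_natCast.1 hf
    rw [contract_ext]
    exact ext_mem_cochain _

theorem contract_add_left (hf : f ∈ cochain R V p) (x x' : V) :
    contract p (x + x') f = contract p x f + contract p x' f := by
  rcases lt_or_ge p 0 with hp | hp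
  · simp [contract_of_neg hp]
  · lift p to ℕ using hp
    obtain ⟨A, rfl⟩ := mem_cochain_natCast.1 hf
    simp only [contract_ext, map_add]
    rfl

theorem contract_smul_left (hf : f ∈ cochain R V p) (c : R) (x : V) :
    contract p (c • x) f = c • contract p x f := by
  rcases lt_or_ge p 0 with hp | hp
  · simp [contract_of_neg hp]
  · lift p to ℕ using hp
    obtain ⟨A, rfl⟩ := mem_cochain_natCast.1 hf
    simp only [contract_ext, map_smul]
    rfl

theorem contract_contract_self (hf : f ∈ cochain R V p) (x : V) :
    contract (p - 1) x (contract p x f) = 0 := by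
  rcases lt_or_ge p 1 with hp | hp
  · exact contract_of_neg (by omega) _ _
  · obtain ⟨n, rfl⟩ : ∃ n : ℕ, p = (n + 1 : ℕ) := ⟨(p - 1).toNat, by omega⟩
    obtain ⟨A, rfl⟩ := mem_cochain_natCast.1 hf
    rw [contract_ext, Nat.cast_add_one, add_sub_cancel_right, contract_ext,
      AlternatingMap.curryLeft_same]
    rfl

theorem consSeq_consSeq_swap (hf : f ∈ cochain R V p) (hp : 1 ≤ p) (x x' : V) (y : ℕ → V) :
    f (consSeq x (consSeq x' y)) = -f (consSeq x' (consSeq x y)) := by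
  have polarised := contract_contract_self hf (x + x')
  rw [contract_add_left hf, map_add, contract_add_left (contract_mem_cochain hf x),
    contract_add_left (contract_mem_cochain hf x'), contract_contract_self hf,
    contract_contract_self hf, zero_add, add_zero, add_eq_zero_iff_eq_neg] at polarised
  simpa [contract_apply (show 0 ≤ p by omega), contract_apply (show 0 ≤ p - 1 by omega)]
    using congrFun polarised y

theorem exists_curryLeft_eq {n : ℕ} (A : V →ₗ[R] V [⋀^Fin n]→ₗ[R] V)
    (hA : ∀ x v i, v i = x → A x v = 0) : ∃ B : V [⋀^Fin (n + 1)]→ₗ[R] V, B.curryLeft = A := by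
  let M : MultilinearMap R (fun _ : Fin (n + 1) => V) V :=
    LinearMap.uncurryLeft (M := fun _ => V) (AlternatingMap.toMultilinearMapLM (S := R) ∘ₗ A)
  have M_eq (v : Fin (n + 1) → V) : M v = A (v 0) (Fin.tail v) := rfl
  refine ⟨⟨M, fun v i j hv hij => ?_⟩, ?_⟩
  · change M v = 0
    rw [M_eq]
    cases i using Fin.cases with
    | zero =>
      obtain ⟨j, rfl⟩ := Fin.exists_succ_eq.2 hij.symm
      exact hA _ _ j hv.symm
    | succ i =>
      cases j using Fin.cases with
      | zero => exact hA _ _ i hv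
      | succ j => exact (A (v 0)).map_eq_zero_of_eq _ hv (ne_of_apply_ne Fin.succ hij)
  · ext x v
    rfl

theorem mem_cochain_of_contract (hp : 0 ≤ p)
    (contract_mem : ∀ x, contract p x f ∈ cochain R V (p - 1))
    (contract_add : ∀ x x', contract p (x + x') f = contract p x f + contract p x' f)
    (contract_smul : ∀ (c : R) x, contract p (c • x) f = c • contract p x f)
    (contract_contract : ∀ x, contract (p - 1) x (contract p x f) = 0) :
    f ∈ cochain R V p := by
  obtain ⟨n, rfl⟩ := Int.eq_ofNat_of_zero_le hp
  choose A hA using fun x => mem_cochain_natCast_sub_one.1 (contract_mem x)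
  let A' : V →ₗ[R] V [⋀^Fin n]→ₗ[R] V :=
    { toFun := A
      map_add' x x' := ext_injective <| by
        rw [hA, contract_add, ← hA, ← hA]
        rfl
      map_smul' c x := ext_injective <| by
        rw [hA, contract_smul, ← hA]
        rfl }
  have apply_eq_zero (x : V) (v : Fin n → V) (i : Fin n) (hv : v i = x) : A' x v = 0 := by
    obtain ⟨n, rfl⟩ : ∃ m, n = m + 1 := Nat.exists_eq_add_one.2 i.pos
    have curryLeft_eq_zero : (A x).curryLeft x = 0 := by
      refine ext_injective (?_ : _ = (0 : (ℕ → V) → V))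
      rw [← contract_ext, hA, ← contract_contract x, Nat.cast_add_one, add_sub_cancel_right]
    have of_apply_zero (w : Fin (n + 1) → V) (hw : w 0 = x) : A x w = 0 := by
      rw [← Fin.cons_self_tail w, hw]
      exact DFunLike.congr_fun curryLeft_eq_zero (Fin.tail w)
    rcases eq_or_ne i 0 with rfl | hi
    · exact of_apply_zero v hv
    · rw [← neg_eq_zero, ← AlternatingMap.map_swap _ v hi.symm]
      exact of_apply_zero _ (by simp [hv])
  obtain ⟨B, hB⟩ := exists_curryLeft_eq A' apply_eq_zero
  refine mem_cochain_natCast.2 ⟨B, eq_of_contract_eq n.cast_nonneg fun x => ?_⟩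
  rw [contract_ext, hB, ← hA]
  rfl

/-- The insertion product of cochains of degrees `p` and `q`, itself a cochain of degree `p + q`. -/
noncomputable def insDeg (p q : ℤ) (f g : (ℕ → V) → V) : (ℕ → V) → V :=
  ins (p + 1).toNat (q + 1).toNat f g

theorem insDeg_natCast_sub_one (a b : ℕ) (f g : (ℕ → V) → V) :
    insDeg ((a : ℤ) - 1) ((b : ℤ) - 1) f g = ins a b f g := by
  simp only [insDeg, sub_add_cancel, Int.toNat_natCast]

theorem insDeg_of_neg (hp : p < 0) (f g : (ℕ → V) → V) : insDeg p q f g = 0 := by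
  rw [insDeg, show (p + 1).toNat = 0 by omega, ins_zero_left]

theorem insDeg_eq_sum (hp : 0 ≤ p) (f g : (ℕ → V) → V) (x : ℕ → V) :
    insDeg p q f g x =
      ∑ σ : Equiv.Perm (Fin (p.toNat + (q + 1).toNat)) with IsShuffle (q + 1).toNat σ,
        Equiv.Perm.sign σ • insTerm (q + 1).toNat f g (permSeq σ x) :=
  ins_eq_sum (by omega) (by omega) f g x

variable (R) in
theorem isLinearMap_insDeg_left (p q : ℤ) (g : (ℕ → V) → V) :
    IsLinearMap R fun f => insDeg p q f g := by
  rcases lt_or_ge p 0 with hp | hp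
  · simp only [insDeg_of_neg hp]
    exact (0 : _ →ₗ[R] _).isLinear
  · constructor
    · intro f f'
      funext x
      simp only [Pi.add_apply, insDeg_eq_sum hp, insTerm, smul_add, Finset.sum_add_distrib]
    · intro c f
      funext x
      simp only [Pi.smul_apply, insDeg_eq_sum hp, insTerm, smul_comm _ c, Finset.smul_sum]

theorem isLinearMap_insDeg_right (hf : f ∈ cochain R V p) (q : ℤ) :
    IsLinearMap R fun g => insDeg p q f g := by
  rcases lt_or_ge p 0 with hp | hp
  · simp only [insDeg_of_neg hp]
    exact (0 : _ →ₗ[R] _).isLinear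
  · constructor
    · intro g g'
      funext x
      simp only [Pi.add_apply, insDeg_eq_sum hp, insTerm, ← contract_apply hp,
        contract_add_left hf, smul_add, Finset.sum_add_distrib]
    · intro c g
      funext x
      simp only [Pi.smul_apply, insDeg_eq_sum hp, insTerm, ← contract_apply hp,
        contract_smul_left hf, smul_comm _ c, Finset.smul_sum]

theorem map_units_smul_of_isLinearMap {M N : Type*} [AddCommGroup M] [Module R M]
    [AddCommGroup N] [Module R N] {F : M → N} (hF : IsLinearMap R F) (u : ℤˣ) (m : M) :
    F (u • m) = u • F m := by
  rcases Int.units_eq_one_or u with rfl | rfl <;> simp [hF.map_neg]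

theorem insDeg_zero_left (p q : ℤ) (g : (ℕ → V) → V) : insDeg p q 0 g = 0 :=
  (isLinearMap_insDeg_left ℤ p q g).map_zero

theorem insDeg_sub_left (p q : ℤ) (f f' g : (ℕ → V) → V) :
    insDeg p q (f - f') g = insDeg p q f g - insDeg p q f' g :=
  (isLinearMap_insDeg_left ℤ p q g).map_sub f f'

theorem insDeg_units_smul_left (p q : ℤ) (u : ℤˣ) (f g : (ℕ → V) → V) :
    insDeg p q (u • f) g = u • insDeg p q f g :=
  map_units_smul_of_isLinearMap (isLinearMap_insDeg_left ℤ p q g) u f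

theorem insDeg_zero_right (hf : f ∈ cochain R V p) (q : ℤ) : insDeg p q f 0 = 0 :=
  (isLinearMap_insDeg_right hf q).map_zero

theorem insDeg_sub_right (hf : f ∈ cochain R V p) (q : ℤ) (g g' : (ℕ → V) → V) :
    insDeg p q f (g - g') = insDeg p q f g - insDeg p q f g' :=
  (isLinearMap_insDeg_right hf q).map_sub g g'

theorem insDeg_units_smul_right (hf : f ∈ cochain R V p) (q : ℤ) (u : ℤˣ) (g : (ℕ → V) → V) :
    insDeg p q f (u • g) = u • insDeg p q f g :=
  map_units_smul_of_isLinearMap (isLinearMap_insDeg_right hf q) u g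

theorem insDeg_const (hf : f ∈ cochain R V p) (v : V) :
    insDeg p (-1) f (fun _ => v) = contract p v f := by
  rcases lt_or_ge p 0 with hp | hp
  · rw [insDeg_of_neg hp, contract_of_neg hp]
  · obtain ⟨n, rfl⟩ := Int.eq_ofNat_of_zero_le hp
    obtain ⟨A, rfl⟩ := mem_cochain_natCast.1 hf
    funext x
    rw [insDeg, neg_add_cancel, Int.toNat_zero, ins_zero_right (by omega), contract_apply hp,
      ext_consSeq, ext_consSeq]
    refine congrArg (A.curryLeft v) (funext fun i => if_pos ?_)
    omega

theorem contract_insDeg (hf : f ∈ cochain R V p) (hg : g ∈ cochain R V q) (x : V) :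
    contract (p + q) x (insDeg p q f g) =
      insDeg p (q - 1) f (contract q x g) + q.negOnePow • insDeg (p - 1) q (contract p x f) g := by
  rcases lt_or_ge p 0 with hp | hp
  · simp [insDeg_of_neg, hp, show p - 1 < 0 by omega]
  rcases lt_or_ge q (-1) with hq | hq
  · simp [eq_zero_of_mem_cochain hg hq, insDeg_zero_right hf,
      insDeg_zero_right (contract_mem_cochain hf x)]
  rcases lt_or_ge (p + q) 0 with hpq | hpq
  · rw [contract_of_neg hpq, contract_of_neg (by omega : q < 0), insDeg_zero_right hf,
      insDeg_of_neg (by omega), smul_zero, add_zero]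
  funext y
  have sign_eq : (-1 : ℤˣ) ^ ((q + 1).toNat + 1) = q.negOnePow := by
    rw [← zpow_natCast, ← Int.negOnePow_def, show (((q + 1).toNat + 1 : ℕ) : ℤ) = q + 2 by omega,
      Int.negOnePow_add, Int.negOnePow_even 2 even_two, mul_one]
  rw [contract_apply hpq, insDeg, ins_consSeq (by omega) (by omega)
    fun _ => consSeq_consSeq_swap hf (by omega), sign_eq, Pi.add_apply]
  congr 1
  · split_ifs with hq0
    · simp only [insDeg, contract, AddMonoidHom.coe_mk, ZeroHom.coe_mk,
        if_pos (by omega : 0 ≤ q), show (q - 1 + 1).toNat = (q + 1).toNat - 1 by omega]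
    · rw [contract_of_neg (by omega), insDeg_zero_right hf, Pi.zero_apply]
  · split_ifs with hp2
    · simp only [insDeg, contract, AddMonoidHom.coe_mk, ZeroHom.coe_mk, if_pos hp,
        show (p - 1 + 1).toNat = (p + 1).toNat - 1 by omega, Pi.smul_apply]
    · rw [insDeg_of_neg (by omega), smul_zero, Pi.zero_apply]

theorem contract_contract_insDeg (hf : f ∈ cochain R V p) (hg : g ∈ cochain R V q) (x : V) :
    contract (p + q - 1) x (contract (p + q) x (insDeg p q f g)) = 0 := by
  have contract_right := contract_insDeg hf (contract_mem_cochain hg x) x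
  have contract_left := contract_insDeg (contract_mem_cochain hf x) hg x
  rw [← add_sub_assoc, contract_contract_self hg, insDeg_zero_right hf, zero_add] at contract_right
  rw [sub_add_eq_add_sub, contract_contract_self hf, insDeg_zero_left, smul_zero,
    add_zero] at contract_left
  rw [contract_insDeg hf hg, map_add, contract_units_smul, contract_right, contract_left,
    Int.negOnePow_sub, Int.negOnePow_one, mul_neg_one, Units.neg_smul, neg_add_cancel]

theorem insDeg_mem_cochain {p q : ℤ} {f g : (ℕ → V) → V} (hf : f ∈ cochain R V p)
    (hg : g ∈ cochain R V q) :
    insDeg p q f g ∈ cochain R V (p + q) := by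
  rcases lt_or_ge p 0 with hp | hp
  · rw [insDeg_of_neg hp]
    exact zero_mem _
  rcases lt_trichotomy q (-1) with hq | rfl | hq
  · rw [eq_zero_of_mem_cochain hg hq, insDeg_zero_right hf]
    exact zero_mem _
  · obtain ⟨v, rfl⟩ := exists_eq_const_of_mem_cochain hg
    rw [insDeg_const hf]
    exact contract_mem_cochain hf v
  refine mem_cochain_of_contract (by omega) (fun x => ?_) (fun x x' => ?_) (fun c x => ?_)
    (contract_contract_insDeg hf hg)
  · rw [contract_insDeg hf hg]
    have right_mem := insDeg_mem_cochain hf (contract_mem_cochain hg x)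
    have left_mem := insDeg_mem_cochain (contract_mem_cochain hf x) hg
    rw [← add_sub_assoc] at right_mem
    rw [sub_add_eq_add_sub] at left_mem
    exact add_mem right_mem (Submodule.smul_of_tower_mem _ _ left_mem)
  · simp only [contract_insDeg hf hg, contract_add_left hf, contract_add_left hg,
      (isLinearMap_insDeg_left R _ _ _).map_add, (isLinearMap_insDeg_right hf _).map_add,
      smul_add, add_add_add_comm]
  · simp only [contract_insDeg hf hg, contract_smul_left hf, contract_smul_left hg,
      (isLinearMap_insDeg_left R _ _ _).map_smul, (isLinearMap_insDeg_right hf _).map_smul,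
      smul_add, smul_comm c]
termination_by (p + q + 1).toNat
decreasing_by all_goals omega

/-- The associator `(f ∘ g) ∘ h - f ∘ (g ∘ h)` of the insertion product, for cochains of degrees
`p`, `q` and `r`. -/
noncomputable def associator (p q r : ℤ) (f g h : (ℕ → V) → V) : (ℕ → V) → V :=
  insDeg (p + q) r (insDeg p q f g) h - insDeg p (q + r) f (insDeg q r g h)

theorem contract_associator (hf : f ∈ cochain R V p) (hg : g ∈ cochain R V q)
    (hh : h ∈ cochain R V r) (x : V) :
    contract (p + q + r) x (associator p q r f g h) =
      associator p q (r - 1) f g (contract r x h)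
        + r.negOnePow • associator p (q - 1) r f (contract q x g) h
        + (q + r).negOnePow • associator (p - 1) q r (contract p x f) g h := by
  have outer_left := contract_insDeg (insDeg_mem_cochain hf hg) hh x
  have outer_right := contract_insDeg hf (insDeg_mem_cochain hg hh) x
  rw [← add_assoc] at outer_right
  rw [associator, map_sub, outer_left, outer_right, contract_insDeg hf hg, contract_insDeg hg hh]
  simp only [associator, ← add_sub_assoc, sub_add_eq_add_sub,
    (isLinearMap_insDeg_left ℤ _ _ _).map_add, (isLinearMap_insDeg_right hf _).map_add,
    insDeg_units_smul_left, insDeg_units_smul_right hf,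
    Int.negOnePow_add, smul_add, smul_sub, mul_smul, smul_comm r.negOnePow q.negOnePow]
  abel

theorem associator_const_right (hf : f ∈ cochain R V p) (hg : g ∈ cochain R V q) (v : V) :
    associator p q (-1) f g (fun _ => v) = q.negOnePow • insDeg (p - 1) q (contract p v f) g := by
  rw [associator, insDeg_const (insDeg_mem_cochain hf hg), insDeg_const hg, contract_insDeg hf hg,
    ← sub_eq_add_neg, add_sub_cancel_left]

theorem associator_const_middle (hf : f ∈ cochain R V p) (h : (ℕ → V) → V) (v : V) :
    associator p (-1) r f (fun _ => v) h = insDeg (p - 1) r (contract p v f) h := by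
  rw [associator, insDeg_const hf, insDeg_of_neg (by decide : (-1 : ℤ) < 0),
    insDeg_zero_right hf, sub_zero, ← sub_eq_add_neg]

theorem associator_of_neg (hp : p < 0) (f g h : (ℕ → V) → V) : associator p q r f g h = 0 := by
  rw [associator, insDeg_of_neg hp, insDeg_of_neg hp, sub_zero]
  exact insDeg_zero_left _ _ _

theorem associator_zero_middle (hf : f ∈ cochain R V p) (h : (ℕ → V) → V) :
    associator p q r f 0 h = 0 := by
  rw [associator, insDeg_zero_right hf,
    insDeg_zero_left, insDeg_zero_left,
    insDeg_zero_right hf, sub_zero]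

theorem associator_zero_right (hf : f ∈ cochain R V p) (hg : g ∈ cochain R V q) :
    associator p q r f g 0 = 0 := by
  rw [associator, insDeg_zero_right (insDeg_mem_cochain hf hg),
    insDeg_zero_right hg, insDeg_zero_right hf, sub_zero]

theorem associator_symm {p q r : ℤ} {f g h : (ℕ → V) → V} (hf : f ∈ cochain R V p)
    (hg : g ∈ cochain R V q) (hh : h ∈ cochain R V r) :
    associator p q r f g h = (q * r).negOnePow • associator p r q f h g := by
  rcases lt_or_ge p 0 with hp | hp
  · rw [associator_of_neg hp, associator_of_neg hp, smul_zero]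
  rcases lt_trichotomy q (-1) with hq | rfl | hq
  · rw [eq_zero_of_mem_cochain hg hq, associator_zero_middle hf, associator_zero_right hf hh,
      smul_zero]
  · obtain ⟨v, rfl⟩ := exists_eq_const_of_mem_cochain hg
    rw [associator_const_middle hf, associator_const_right hf hh, neg_one_mul, Int.negOnePow_neg,
      smul_smul, Int.units_mul_self, one_smul]
  rcases lt_trichotomy r (-1) with hr | rfl | hr
  · rw [eq_zero_of_mem_cochain hh hr, associator_zero_middle hf, associator_zero_right hf hg,
      smul_zero]
  · obtain ⟨v, rfl⟩ := exists_eq_const_of_mem_cochain hh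
    rw [associator_const_middle hf, associator_const_right hf hg, mul_neg_one, Int.negOnePow_neg]
  refine eq_of_contract_eq (p := p + q + r) (by omega) fun x => ?_
  have contract_swapped := contract_associator hf hh hg x
  rw [add_right_comm] at contract_swapped
  rw [contract_units_smul, contract_swapped, contract_associator hf hg hh,
    associator_symm hf hg (contract_mem_cochain hh x),
    associator_symm hf (contract_mem_cochain hg x) hh,
    associator_symm (contract_mem_cochain hf x) hg hh, add_comm r q]
  rcases Int.units_eq_one_or q.negOnePow with hεq | hεq <;>
    rcases Int.units_eq_one_or r.negOnePow with hεr | hεr <;>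
    rcases Int.units_eq_one_or (q * r).negOnePow with hεqr | hεqr <;>
    simp only [mul_sub, sub_mul, mul_one, one_mul, Int.negOnePow_sub, Int.negOnePow_add, hεq, hεr,
      hεqr, one_smul, smul_add, Units.neg_smul, smul_neg, neg_neg, mul_neg] <;>
    abel
termination_by (p + q + r + 1).toNat
decreasing_by all_goals omega

/-- The Nijenhuis bracket of cochains of degrees `p` and `q`, itself a cochain of degree `p + q`. -/
noncomputable def nijDeg (p q : ℤ) (f g : (ℕ → V) → V) : (ℕ → V) → V :=
  insDeg p q f g - (p * q).negOnePow • insDeg q p g f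

theorem nijDeg_natCast_sub_one (a b : ℕ) (f g : (ℕ → V) → V) :
    nijDeg ((a : ℤ) - 1) ((b : ℤ) - 1) f g = nij a b f g := by
  simp only [nijDeg, insDeg_natCast_sub_one, Units.smul_def]
  rfl

theorem nijDeg_mem_cochain (hf : f ∈ cochain R V p) (hg : g ∈ cochain R V q) :
    nijDeg p q f g ∈ cochain R V (p + q) := by
  have flip_mem := insDeg_mem_cochain hg hf
  rw [add_comm] at flip_mem
  exact sub_mem (insDeg_mem_cochain hf hg) (Submodule.smul_of_tower_mem _ _ flip_mem)

theorem nijDeg_sub_left (hg : g ∈ cochain R V q) (p : ℤ) (f f' : (ℕ → V) → V) :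
    nijDeg p q (f - f') g = nijDeg p q f g - nijDeg p q f' g := by
  rw [nijDeg, nijDeg, nijDeg, insDeg_sub_left, insDeg_sub_right hg, smul_sub, sub_sub_sub_comm]

theorem nijDeg_zero_left (hg : g ∈ cochain R V q) (p : ℤ) : nijDeg p q 0 g = 0 := by
  rw [nijDeg, insDeg_zero_left, insDeg_zero_right hg, smul_zero, sub_zero]

theorem nijDeg_zero_right (hf : f ∈ cochain R V p) (q : ℤ) : nijDeg p q f 0 = 0 := by
  rw [nijDeg, insDeg_zero_left, insDeg_zero_right hf, smul_zero, sub_zero]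

theorem nijDeg_anticomm (p q : ℤ) (f g : (ℕ → V) → V) :
    nijDeg p q f g = -((p * q).negOnePow • nijDeg q p g f) := by
  rw [nijDeg, nijDeg, smul_sub, smul_smul, mul_comm q p, Int.units_mul_self, one_smul, neg_sub]

theorem nijDeg_jacobi (hf : f ∈ cochain R V p) (hg : g ∈ cochain R V q)
    (hh : h ∈ cochain R V r) :
    nijDeg p (q + r) f (nijDeg q r g h) =
      nijDeg (p + q) r (nijDeg p q f g) h
        + (p * q).negOnePow • nijDeg q (p + r) g (nijDeg p r f h) := by
  have expansion : nijDeg p (q + r) f (nijDeg q r g h) -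
      (nijDeg (p + q) r (nijDeg p q f g) h
        + (p * q).negOnePow • nijDeg q (p + r) g (nijDeg p r f h)) =
      ((q * r).negOnePow • associator p r q f h g - associator p q r f g h)
        + (p * q).negOnePow •
          (associator q p r g f h - (p * r).negOnePow • associator q r p g h f)
        + ((p + q) * r).negOnePow •
          ((p * q).negOnePow • associator r q p h g f - associator r p q h f g) := by
    simp only [nijDeg, associator, insDeg_sub_left, insDeg_sub_right hf, insDeg_sub_right hg,
      insDeg_sub_right hh, insDeg_units_smul_left, insDeg_units_smul_right hf,
      insDeg_units_smul_right hg, insDeg_units_smul_right hh, add_comm r, add_comm q p,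
      mul_add, add_mul, Int.negOnePow_add, mul_comm q p]
    rcases Int.units_eq_one_or (p * q).negOnePow with hpq | hpq <;>
      rcases Int.units_eq_one_or (q * r).negOnePow with hqr | hqr <;>
      rcases Int.units_eq_one_or (p * r).negOnePow with hpr | hpr <;>
      simp only [hpq, hqr, hpr, one_smul, mul_one, Units.neg_smul, neg_neg, mul_neg] <;>
      abel
  rw [← sub_eq_zero, expansion, associator_symm hf hg hh, associator_symm hg hf hh,
    associator_symm hh hf hg, sub_self, sub_self, sub_self, smul_zero, smul_zero, add_zero,
    add_zero]

variable {a b c : ℕ}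

theorem nij_zero_zero (f g : (ℕ → V) → V) : nij 0 0 f g = 0 := by
  funext x
  simp [nij, ins_zero_left]

/- For `b = c = 0` the truncated arity `b + c - 1` is wrong by one, but then the inner bracket is
zero. -/
theorem nijDeg_nij_right (hf : f ∈ cochain R V p) (b c : ℕ) (g h : (ℕ → V) → V) :
    nijDeg p (((b + c - 1 : ℕ) : ℤ) - 1) f (nij b c g h) =
      nijDeg p ((b - 1 : ℤ) + (c - 1)) f (nij b c g h) := by
  rcases (b + c).eq_zero_or_pos with hbc | hbc
  · obtain ⟨rfl, rfl⟩ := Nat.add_eq_zero_iff.1 hbc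
    rw [nij_zero_zero, nijDeg_zero_right hf, nijDeg_zero_right hf]
  · congr 1
    omega

theorem nijDeg_nij_left (hf : f ∈ cochain R V p) (b c : ℕ) (g h : (ℕ → V) → V) :
    nijDeg (((b + c - 1 : ℕ) : ℤ) - 1) p (nij b c g h) f =
      nijDeg ((b - 1 : ℤ) + (c - 1)) p (nij b c g h) f := by
  rcases (b + c).eq_zero_or_pos with hbc | hbc
  · obtain ⟨rfl, rfl⟩ := Nat.add_eq_zero_iff.1 hbc
    rw [nij_zero_zero, nijDeg_zero_left hf, nijDeg_zero_left hf]
  · congr 1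
    omega

theorem exists_ext_eq_nij (hbc : 0 < b + c) (B : V [⋀^Fin b]→ₗ[R] V) (C : V [⋀^Fin c]→ₗ[R] V) :
    ∃ P : V [⋀^Fin (b + c - 1)]→ₗ[R] V, ext P = nij b c (ext B) (ext C) := by
  have nij_mem := nijDeg_mem_cochain (ext_mem_cochain B) (ext_mem_cochain C)
  rwa [nijDeg_natCast_sub_one,
    show (b - 1 : ℤ) + (c - 1) = ((b + c - 1 : ℕ) : ℤ) - 1 by omega,
    mem_cochain_natCast_sub_one] at nij_mem

theorem nij_zero_right (A : V [⋀^Fin a]→ₗ[R] V) (b : ℕ) : nij a b (ext A) 0 = 0 := by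
  rw [← nijDeg_natCast_sub_one, nijDeg_zero_right (ext_mem_cochain A)]

theorem nij_zero_left (a : ℕ) (B : V [⋀^Fin b]→ₗ[R] V) : nij a b 0 (ext B) = 0 := by
  rw [← nijDeg_natCast_sub_one, nijDeg_zero_left (ext_mem_cochain B)]

theorem nij_sub_left (f f' : (ℕ → V) → V) (B : V [⋀^Fin b]→ₗ[R] V) :
    nij a b (f - f') (ext B) = nij a b f (ext B) - nij a b f' (ext B) := by
  simp only [← nijDeg_natCast_sub_one, nijDeg_sub_left (ext_mem_cochain B)]

theorem nij_anticomm (a b : ℕ) (f g : (ℕ → V) → V) :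
    nij a b f g = -((((a : ℤ) - 1) * ((b : ℤ) - 1)).negOnePow : ℤ) • nij b a g f := by
  rw [← nijDeg_natCast_sub_one, ← nijDeg_natCast_sub_one, nijDeg_anticomm, Units.smul_def, neg_smul]

theorem nij_jacobi (A : V [⋀^Fin a]→ₗ[R] V) (B : V [⋀^Fin b]→ₗ[R] V) (C : V [⋀^Fin c]→ₗ[R] V) :
    nij a (b + c - 1) (ext A) (nij b c (ext B) (ext C)) =
      nij (a + b - 1) c (nij a b (ext A) (ext B)) (ext C)
        + ((((a : ℤ) - 1) * ((b : ℤ) - 1)).negOnePow : ℤ) •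
            nij b (a + c - 1) (ext B) (nij a c (ext A) (ext C)) := by
  have jacobi := nijDeg_jacobi (ext_mem_cochain A) (ext_mem_cochain B) (ext_mem_cochain C)
  simp only [nijDeg_natCast_sub_one, Units.smul_def] at jacobi
  simp only [← nijDeg_natCast_sub_one _ (_ + _ - 1), ← nijDeg_natCast_sub_one (_ + _ - 1)]
  rwa [nijDeg_nij_right (ext_mem_cochain A), nijDeg_nij_left (ext_mem_cochain C),
    nijDeg_nij_right (ext_mem_cochain B)]

/-- `f` lies in the image of `[μ, ·] : C^{n-1} → C^n`, which is `0` if `n = 0`. This is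
`IsCoboundary` for an alternating bilinear map `μ` on a module, which need not be a Lie bracket. -/
def IsNijCoboundary (μ : V [⋀^Fin 2]→ₗ[R] V) (n : ℕ) (f : (ℕ → V) → V) : Prop :=
  (n = 0 ∧ f = 0) ∨ ∃ (m : ℕ) (P : V [⋀^Fin m]→ₗ[R] V), n = m + 1 ∧ f = nij 2 m (ext μ) (ext P)

variable {μ : V [⋀^Fin 2]→ₗ[R] V}

theorem IsNijCoboundary.zero (μ : V [⋀^Fin 2]→ₗ[R] V) (n : ℕ) :
    IsNijCoboundary μ n (0 : (ℕ → V) → V) := by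
  rcases n with _ | m
  · exact .inl ⟨rfl, rfl⟩
  · exact .inr ⟨m, 0, rfl, (nij_zero_right μ m).symm⟩

/-- If `f = [μ, P]` and `[μ, B] = 0`, then `[f, B] = [μ, [P, B]]` by the Jacobi identity. -/
theorem IsNijCoboundary.nij (hf : IsNijCoboundary μ a f) {B : V [⋀^Fin b]→ₗ[R] V}
    (hB : nij 2 b (ext μ) (ext B) = 0) : IsNijCoboundary μ (a + b - 1) (nij a b f (ext B)) := by
  rcases hf with ⟨rfl, rfl⟩ | ⟨m, P, rfl, rfl⟩
  · rw [nij_zero_left]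
    exact .zero μ _
  have jacobi := nij_jacobi μ P B
  rw [hB, nij_zero_right, smul_zero, add_zero, show 2 + m - 1 = m + 1 by omega] at jacobi
  rw [← jacobi]
  rcases (m + b).eq_zero_or_pos with hmb | hmb
  · obtain ⟨rfl, rfl⟩ := Nat.add_eq_zero_iff.1 hmb
    rw [nij_zero_zero, nij_zero_right]
    exact .zero μ _
  · obtain ⟨Q, hQ⟩ := exists_ext_eq_nij hmb P B
    exact .inr ⟨m + b - 1, Q, by omega, by rw [hQ]⟩

end Nijenhuis

open Nijenhuis in
theorem nij_descends_to_cohomology_general {R V : Type*} [CommRing R] [AddCommGroup V] [Module R V]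
    (μ : V [⋀^Fin 2]→ₗ[R] V) :
    (∀ (a b : ℕ) (A A' : V [⋀^Fin a]→ₗ[R] V) (B : V [⋀^Fin b]→ₗ[R] V),
      nij 2 b (ext μ) (ext B) = 0 →
      IsNijCoboundary μ a (ext A - ext A') →
      IsNijCoboundary μ (a + b - 1) (nij a b (ext A) (ext B) - nij a b (ext A') (ext B))) ∧
    (∀ (a b : ℕ) (A : V [⋀^Fin a]→ₗ[R] V) (B : V [⋀^Fin b]→ₗ[R] V),
      nij a b (ext A) (ext B) =
        -((((a : ℤ) - 1) * ((b : ℤ) - 1)).negOnePow : ℤ) • nij b a (ext B) (ext A)) ∧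
    (∀ (a b c : ℕ) (A : V [⋀^Fin a]→ₗ[R] V) (B : V [⋀^Fin b]→ₗ[R] V) (C : V [⋀^Fin c]→ₗ[R] V),
      nij a (b + c - 1) (ext A) (nij b c (ext B) (ext C)) =
        nij (a + b - 1) c (nij a b (ext A) (ext B)) (ext C)
          + ((((a : ℤ) - 1) * ((b : ℤ) - 1)).negOnePow : ℤ) •
              nij b (a + c - 1) (ext B) (nij a c (ext A) (ext C))) := by
  refine ⟨fun a b A A' B hB hAA' => ?_, fun a b A B => nij_anticomm a b _ _,
    fun a b c A B C => nij_jacobi A B C⟩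
  rw [← nij_sub_left]
  exact hAA'.nij hB

/-- the Nijenhuis bracket descends to a well-defined bilinear operation
`H^a × H^b → H^{a+b-1}` on the cohomology `H^• = Z^•/B^•` of a Lie algebra `g` over a
field `K` of characteristic 0 (if `A, A' ∈ Z^a` with `A − A' ∈ B^a` and `B ∈ Z^b`, then
`[A,B] − [A',B] ∈ B^{a+b−1}`), and the induced bracket satisfies graded anticommutativity
`[α,β] = −(−1)^{(a−1)(b−1)}[β,α]` and the graded Jacobi identity
`[α,[β,γ]] = [[α,β],γ] + (−1)^{(a−1)(b−1)}[β,[α,γ]]`; thus `⊕_a H^a`, with `H^a` in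
degree `a−1`, is a graded Lie superalgebra. -/
theorem nij_descends_to_cohomology
    (μ : AlternatingMap K L L (Fin 2)) (hμ : ∀ x y : L, μ ![x, y] = ⁅x, y⁆) :
    -- well-definedness on cohomology classes
    (∀ (a b : ℕ) (A A' : AlternatingMap K L L (Fin a)) (B : AlternatingMap K L L (Fin b)),
      IsCocycle μ a (ext ⇑A) → IsCocycle μ a (ext ⇑A') → IsCocycle μ b (ext ⇑B) →
      IsCoboundary μ a (ext ⇑A - ext ⇑A') →
      IsCoboundary μ (a + b - 1)
        (nij a b (ext ⇑A) (ext ⇑B) - nij a b (ext ⇑A') (ext ⇑B))) ∧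
    -- graded anticommutativity of the induced bracket
    (∀ (a b : ℕ) (A : AlternatingMap K L L (Fin a)) (B : AlternatingMap K L L (Fin b)),
      IsCocycle μ a (ext ⇑A) → IsCocycle μ b (ext ⇑B) →
      IsCoboundary μ (a + b - 1)
        (nij a b (ext ⇑A) (ext ⇑B)
          + (Int.negOnePow (((a : ℤ) - 1) * ((b : ℤ) - 1)) : ℤ) •
              nij b a (ext ⇑B) (ext ⇑A))) ∧
    -- graded Jacobi identity of the induced bracket
    (∀ (a b c : ℕ) (A : AlternatingMap K L L (Fin a)) (B : AlternatingMap K L L (Fin b))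
        (C : AlternatingMap K L L (Fin c)),
      IsCocycle μ a (ext ⇑A) → IsCocycle μ b (ext ⇑B) → IsCocycle μ c (ext ⇑C) →
      IsCoboundary μ (a + (b + c - 1) - 1)
        (nij a (b + c - 1) (ext ⇑A) (nij b c (ext ⇑B) (ext ⇑C))
          - nij (a + b - 1) c (nij a b (ext ⇑A) (ext ⇑B)) (ext ⇑C)
          - (Int.negOnePow (((a : ℤ) - 1) * ((b : ℤ) - 1)) : ℤ) •
              nij b (a + c - 1) (ext ⇑B) (nij a c (ext ⇑A) (ext ⇑C)))) := by
  obtain ⟨wellDefined, anticomm, jacobi⟩ := nij_descends_to_cohomology_general μ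
  refine ⟨fun a b A A' B _ _ hB hAA' => wellDefined a b A A' B hB hAA', fun a b A B _ _ => ?_,
    fun a b c A B C _ _ _ => ?_⟩
  · rw [anticomm, neg_smul, neg_add_cancel]
    exact Nijenhuis.IsNijCoboundary.zero μ _
  · rw [jacobi, add_sub_cancel_left, sub_self]
    exact Nijenhuis.IsNijCoboundary.zero μ _

end
end
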